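/- arXiv:1604.00941 — 4 statements merged into one kernel-verified Lean document; each statement's English description precedes it below -/
import Mathlib

section
/- For every τ in the complex upper half-plane ℍ, one has η(8τ)³ = ∑_{n∈ℤ} (4n+1)·e^{2πiτ(4n+1)²}, where the series on the right converges absolutely. (This is the eta-theta identity E₁(τ) = η(8τ)³ = ∑_{n∈ℤ}(4n+1)q^{(4n+1)²} with q = e^{2πiτ}.) -/
open Complex

/-- The Dedekind eta function `η(τ) = e^{πiτ/12} ∏_{n≥1} (1 - e^{2πinτ})`. -/
noncomputable def dedekindEta (τ : ℂ) : ℂ :=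
  Complex.exp ((Real.pi : ℂ) * I * τ / 12) *
    ∏' n : ℕ, (1 - Complex.exp (2 * (Real.pi : ℂ) * I * ((n : ℂ) + 1) * τ))

/-- Partial products. -/
noncomputable def qP (q : ℂ) (n : ℕ) : ℂ := ∏ k ∈ Finset.range n, (1 - q ^ (k + 1))

/-- Gaussian binomials. -/
noncomputable def qG (q : ℂ) : ℕ → ℕ → ℂ
  | _, 0 => 1
  | 0, _ + 1 => 0
  | N + 1, m + 1 => qG q N (m + 1) + q ^ (N - m) * qG q N m

lemma qG_zero (q : ℂ) (N : ℕ) : qG q N 0 = 1 := by cases N <;> simp [qG]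

lemma qG_succ (q : ℂ) (N m : ℕ) :
    qG q (N + 1) (m + 1) = qG q N (m + 1) + q ^ (N - m) * qG q N m := by simp [qG]

lemma qG_gt (q : ℂ) : ∀ (N m : ℕ), N < m → qG q N m = 0 := by
  intro N
  induction N with
  | zero => intro m hm; cases m with
    | zero => omega
    | succ m => simp [qG]
  | succ N ih =>
    intro m hm
    cases m with
    | zero => omega
    | succ m => rw [qG_succ, ih _ (by omega), ih _ (by omega)]; simp

lemma qP_succ (q : ℂ) (n : ℕ) : qP q (n + 1) = qP q n * (1 - q ^ (n + 1)) := by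
  simp [qP, Finset.prod_range_succ]

lemma qG_mul (q : ℂ) : ∀ (N m k : ℕ), m + k = N → qG q N m * qP q m * qP q k = qP q N := by
  intro N
  induction N with
  | zero =>
    intro m k h
    obtain ⟨rfl, rfl⟩ : m = 0 ∧ k = 0 := by omega
    simp [qG, qP]
  | succ N ih =>
    intro m k h
    cases m with
    | zero =>
      obtain rfl : k = N + 1 := by omega
      simp [qG_zero, qP]
    | succ m =>
      cases k with
      | zero =>
        obtain rfl : m = N := by omega
        have := ih m 0 (by omega)
        rw [qG_succ, qG_gt q m (m + 1) (by omega), qP_succ]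
        simp only [Nat.sub_self, pow_zero, one_mul, zero_add]
        linear_combination (1 - q ^ (m + 1)) * this
      | succ k =>
        have h1 := ih (m + 1) k (by omega)
        have h2 := ih m (k + 1) (by omega)
        rw [qG_succ, qP_succ q N, show N - m = k + 1 by omega]
        rw [qP_succ q m] at h1 ⊢
        rw [qP_succ q k] at h2 ⊢
        have h3 : q ^ (N + 1) = q ^ (k + 1) * q ^ (m + 1) := by
          rw [← pow_add]; congr 1; omega
        rw [h3]
        linear_combination (1 - q ^ (k + 1)) * h1 + q ^ (k + 1) * (1 - q ^ (m + 1)) * h2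

lemma qbinom (r : ℂ) (hr : r ≠ 0) (x : ℂ) (N : ℕ) :
    ∏ k ∈ Finset.range N, (1 + x * (r ^ 2) ^ k) =
      ∑ m ∈ Finset.range (N + 1), r ^ ((m : ℤ) * (m - 1)) * qG (r ^ 2) N m * x ^ m := by
  induction N with
  | zero => simp [qG]
  | succ N ih =>
    rw [Finset.prod_range_succ, ih, Finset.sum_range_succ' _ (N + 1)]
    have h : ∀ m ∈ Finset.range (N + 1),
        r ^ (((m + 1 : ℕ) : ℤ) * ((m + 1 : ℕ) - 1)) * qG (r ^ 2) (N + 1) (m + 1) * x ^ (m + 1) =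
        r ^ (((m + 1 : ℕ) : ℤ) * ((m + 1 : ℕ) - 1)) * qG (r ^ 2) N (m + 1) * x ^ (m + 1) +
        (r ^ ((m : ℤ) * (m - 1)) * qG (r ^ 2) N m * x ^ m) * (x * (r ^ 2) ^ N) := by
      intro m hm
      have hm' : m ≤ N := by simpa [Nat.lt_succ_iff] using hm
      have e1 : r ^ (((m + 1 : ℕ) : ℤ) * ((m + 1 : ℕ) - 1)) =
          r ^ ((m : ℤ) * (m - 1)) * (r ^ 2) ^ m := by
        rw [← pow_mul, ← zpow_natCast, ← zpow_add₀ hr]; congr 1; push_cast; ring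
      have e2 : (r ^ 2) ^ N = (r ^ 2) ^ m * (r ^ 2) ^ (N - m) := by
        rw [← pow_add]; congr 1; omega
      rw [qG_succ, e1, e2]
      ring
    rw [Finset.sum_congr rfl h, Finset.sum_add_distrib, ← Finset.sum_mul, mul_add, mul_one]
    have t1 := Finset.sum_range_succ
      (fun m : ℕ => r ^ ((m : ℤ) * (m - 1)) * qG (r ^ 2) N m * x ^ m) (N + 1)
    have t2 := Finset.sum_range_succ'
      (fun m : ℕ => r ^ ((m : ℤ) * (m - 1)) * qG (r ^ 2) N m * x ^ m) (N + 1)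
    rw [qG_gt _ N (N + 1) (by omega), mul_zero, zero_mul, add_zero] at t1
    rw [t1] at t2
    simp only [qG_zero] at t2 ⊢
    linear_combination t2

lemma prod_neg (r : ℂ) (hr : r ≠ 0) (n : ℕ) :
    ∏ k ∈ Finset.range n, (1 + (-((r ^ 2) ^ n)⁻¹) * (r ^ 2) ^ k) =
      (-1) ^ n * r ^ (-((n : ℤ) * (n + 1))) * qP (r ^ 2) n := by
  rw [← Finset.prod_range_reflect]
  have : ∀ k ∈ Finset.range n, (1 + (-((r ^ 2) ^ n)⁻¹) * (r ^ 2) ^ (n - 1 - k)) =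
      1 - ((r ^ 2) ^ (k + 1))⁻¹ := by
    intro k hk
    have hk' := Finset.mem_range.1 hk
    have e : (r ^ 2) ^ n = (r ^ 2) ^ (n - 1 - k) * (r ^ 2) ^ (k + 1) := by
      rw [← pow_add]; congr 1; omega
    rw [e]
    have : (r ^ 2) ^ (n - 1 - k) ≠ 0 := by positivity
    have : (r ^ 2) ^ (k + 1) ≠ 0 := by positivity
    field_simp
    ring
  rw [Finset.prod_congr rfl this]
  clear this
  induction n with
  | zero => simp [qP]
  | succ n ih =>
    rw [Finset.prod_range_succ, ih, qP_succ]
    have e : r ^ (-(((n + 1 : ℕ) : ℤ) * ((n + 1 : ℕ) + 1))) =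
        r ^ (-((n : ℤ) * (n + 1))) * ((r ^ 2) ^ (n + 1))⁻¹ := by
      rw [← pow_mul, ← zpow_natCast, ← zpow_neg, ← zpow_add₀ hr]; congr 1; push_cast; ring
    rw [e]
    have : (r ^ 2) ^ (n + 1) ≠ 0 := by positivity
    field_simp
    ring

/-- Limit coefficients. -/
noncomputable def qF (r : ℂ) (j : ℤ) : ℂ := -(j * (-1) ^ j * r ^ (j * (j - 1)))

lemma finite_id (r : ℂ) (hr : r ≠ 0) (n : ℕ) :
    qP (r ^ 2) n ^ 2 =
      ∑ m ∈ Finset.range (2 * n + 2), qF r ((m : ℤ) - n) * qG (r ^ 2) (2 * n + 1) m := by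
  set x₀ : ℂ := -((r ^ 2) ^ n)⁻¹ with hx₀
  have hqn : (r ^ 2) ^ n ≠ 0 := by positivity
  have hroot : 1 + x₀ * (r ^ 2) ^ n = 0 := by rw [hx₀]; field_simp; ring
  -- factorization
  have hfac : ∀ x : ℂ, (1 + x * (r ^ 2) ^ n) * ((∏ k ∈ Finset.range n, (1 + x * (r ^ 2) ^ k)) *
      ∏ k ∈ Finset.range n, (1 + x * (r ^ 2) ^ (n + 1 + k))) =
      ∑ m ∈ Finset.range (2 * n + 2), r ^ ((m : ℤ) * (m - 1)) * qG (r ^ 2) (2 * n + 1) m * x ^ m := by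
    intro x
    rw [← qbinom r hr x (2 * n + 1), show 2 * n + 1 = (n + 1) + n by ring, Finset.prod_range_add,
      Finset.prod_range_succ]
    ring
  have h0 := hfac x₀
  rw [hroot, zero_mul] at h0
  have hd1 : HasDerivAt (fun x : ℂ => (1 + x * (r ^ 2) ^ n) *
      ((∏ k ∈ Finset.range n, (1 + x * (r ^ 2) ^ k)) *
      ∏ k ∈ Finset.range n, (1 + x * (r ^ 2) ^ (n + 1 + k))))
      ((r ^ 2) ^ n * ((∏ k ∈ Finset.range n, (1 + x₀ * (r ^ 2) ^ k)) *
      ∏ k ∈ Finset.range n, (1 + x₀ * (r ^ 2) ^ (n + 1 + k)))) x₀ := by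
    have hA : HasDerivAt (fun x : ℂ => 1 + x * (r ^ 2) ^ n) ((r ^ 2) ^ n) x₀ := by
      simpa using ((hasDerivAt_id x₀).mul_const ((r ^ 2) ^ n)).const_add 1
    have hB : DifferentiableAt ℂ (fun x : ℂ => (∏ k ∈ Finset.range n, (1 + x * (r ^ 2) ^ k)) *
      ∏ k ∈ Finset.range n, (1 + x * (r ^ 2) ^ (n + 1 + k))) x₀ := by fun_prop
    have := hA.mul hB.hasDerivAt
    rw [hroot, zero_mul, add_zero] at this
    exact this
  have hd2 : HasDerivAt (fun x : ℂ => ∑ m ∈ Finset.range (2 * n + 2),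
      r ^ ((m : ℤ) * (m - 1)) * qG (r ^ 2) (2 * n + 1) m * x ^ m)
      (∑ m ∈ Finset.range (2 * n + 2),
      r ^ ((m : ℤ) * (m - 1)) * qG (r ^ 2) (2 * n + 1) m * (m * x₀ ^ (m - 1))) x₀ := by
    apply HasDerivAt.fun_sum
    intro m _
    exact (hasDerivAt_pow m x₀).const_mul _
  rw [funext hfac] at hd1
  have hd := hd1.unique hd2
  have hP2 : ∏ k ∈ Finset.range n, (1 + x₀ * (r ^ 2) ^ (n + 1 + k)) = qP (r ^ 2) n := by
    apply Finset.prod_congr rfl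
    intro k _
    rw [show n + 1 + k = n + (k + 1) by ring, pow_add, ← mul_assoc]
    linear_combination (r ^ 2) ^ (k + 1) * hroot
  rw [hP2, prod_neg r hr n] at hd
  have key : ∀ m ∈ Finset.range (2 * n + 2), qF r ((m : ℤ) - n) * qG (r ^ 2) (2 * n + 1) m =
      -((-1) ^ n * r ^ ((n : ℤ) * (n + 1))) * (x₀ *
        (r ^ ((m : ℤ) * (m - 1)) * qG (r ^ 2) (2 * n + 1) m * (m * x₀ ^ (m - 1))) - n *
        (r ^ ((m : ℤ) * (m - 1)) * qG (r ^ 2) (2 * n + 1) m * x₀ ^ m)) := by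
    intro m _
    have e1 : x₀ * (m * x₀ ^ (m - 1)) = m * x₀ ^ m := by
      cases m with
      | zero => simp
      | succ m => simp [pow_succ]; ring
    have e2 : x₀ ^ m = (-1) ^ m * r ^ (-(2 * n * m : ℤ)) := by
      rw [hx₀, neg_pow, zpow_neg, inv_pow, ← pow_mul, ← pow_mul]
      congr 2
      rw [← zpow_natCast]
      push_cast
      congr 1
      ring
    have e3 : r ^ (((m : ℤ) - n) * ((m : ℤ) - n - 1)) =
        r ^ ((n : ℤ) * (n + 1)) * r ^ ((m : ℤ) * (m - 1)) * r ^ (-(2 * n * m : ℤ)) := by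
      rw [← zpow_add₀ hr, ← zpow_add₀ hr]; congr 1; ring
    have e4 : (-1 : ℂ) ^ ((m : ℤ) - n) = (-1) ^ n * (-1) ^ m := by
      rw [zpow_sub₀ (by norm_num), zpow_natCast, zpow_natCast, div_eq_mul_inv, ← inv_pow]
      norm_num; ring
    rw [qF, e3, e4]
    push_cast
    have : x₀ * (r ^ ((m : ℤ) * (m - 1)) * qG (r ^ 2) (2 * n + 1) m * (m * x₀ ^ (m - 1))) =
      (r ^ ((m : ℤ) * (m - 1)) * qG (r ^ 2) (2 * n + 1) m * (x₀ * (m * x₀ ^ (m - 1)))) := by ring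
    rw [this, e1, e2]
    ring
  rw [Finset.sum_congr rfl key, ← Finset.mul_sum, Finset.sum_sub_distrib, ← Finset.mul_sum,
    ← Finset.mul_sum, ← h0, ← hd, zpow_neg]
  have hx : x₀ * (r ^ 2) ^ n = -1 := by linear_combination hroot
  have hrn : r ^ ((n : ℤ) * (n + 1)) ≠ 0 := zpow_ne_zero _ hr
  have hs : ((-1 : ℂ) ^ n) * (-1) ^ n = 1 := by rw [← mul_pow]; norm_num
  rw [← mul_assoc x₀, hx]
  field_simp
  linear_combination -(qP (r ^ 2) n ^ 2) * hs

open Filter Topology in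
lemma jacobi_cube (r : ℂ) (hr : r ≠ 0) (h1 : ‖r‖ < 1) (hs : Summable (fun j => ‖qF r j‖)) :
    (∏' n : ℕ, (1 - (r ^ 2) ^ (n + 1))) ^ 3 = ∑' j, qF r j := by
  set q := r ^ 2 with hq
  have hq1 : ‖q‖ < 1 := by
    rw [hq, norm_pow]; exact pow_lt_one₀ (norm_nonneg _) h1 (by norm_num)
  have hne : ∀ n : ℕ, 1 - q ^ (n + 1) ≠ 0 := by
    intro n h
    have h2 : q ^ (n + 1) = 1 := (sub_eq_zero.1 h).symm
    have h3 : ‖q‖ ^ (n + 1) < 1 := pow_lt_one₀ (norm_nonneg _) hq1 (by omega)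
    rw [← norm_pow, h2] at h3
    simp at h3
  have hPne : ∀ n, qP q n ≠ 0 := fun n => Finset.prod_ne_zero_iff.2 fun k _ => hne k
  set E := ∏' n : ℕ, (1 - q ^ (n + 1)) with hE
  have hE0 : E ≠ 0 := by
    have := tprod_one_add_ne_zero_of_summable (f := fun n : ℕ => -q ^ (n + 1))
      (fun i => by simpa [sub_eq_add_neg] using hne i)
      (by simpa using (summable_nat_add_iff 1).mpr (summable_geometric_of_lt_one (norm_nonneg _) hq1))
    simpa [hE, sub_eq_add_neg] using this
  have hmul : Multipliable fun n : ℕ => 1 - q ^ (n + 1) := by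
    apply multipliable_one_add_of_summable (f := fun n ↦ -q ^ (n + 1))
    simpa using (summable_nat_add_iff 1).mpr (summable_geometric_of_lt_one (norm_nonneg _) hq1)
  have hPt : Tendsto (qP q) atTop (𝓝 E) := hmul.hasProd.tendsto_prod_nat
  have hPi : Tendsto (fun n => (qP q n)⁻¹) atTop (𝓝 E⁻¹) := hPt.inv₀ hE0
  obtain ⟨A, hA⟩ := (Metric.isBounded_range_of_tendsto _ hPt).exists_norm_le
  obtain ⟨B, hB⟩ := (Metric.isBounded_range_of_tendsto _ hPi).exists_norm_le
  have hA' : ∀ n, ‖qP q n‖ ≤ A := fun n => hA _ ⟨n, rfl⟩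
  have hB' : ∀ n, ‖(qP q n)⁻¹‖ ≤ B := fun n => hB _ ⟨n, rfl⟩
  have hA0 : 0 ≤ A := (norm_nonneg _).trans (hA' 0)
  have hB0 : 0 ≤ B := (norm_nonneg _).trans (hB' 0)
  have hG : ∀ m k, qG q (m + k) m = qP q (m + k) * (qP q m)⁻¹ * (qP q k)⁻¹ := by
    intro m k
    have := qG_mul q (m + k) m k rfl
    have := hPne m
    have := hPne k
    field_simp
    assumption
  have hGb : ∀ N m, ‖qG q N m‖ ≤ A * B * B := by
    intro N m
    rcases lt_or_ge N m with h | h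
    · rw [qG_gt q N m h, norm_zero]; positivity
    · obtain ⟨k, rfl⟩ := Nat.exists_eq_add_of_le h
      rw [hG, norm_mul, norm_mul]
      gcongr
      · exact hA' _
      · exact hB' _
      · exact hB' _
  let f : ℕ → ℤ → ℂ := fun n j =>
    if 0 ≤ j + n then qF r j * qG q (2 * n + 1) (j + n).toNat else 0
  have hf : ∀ n, ∑' j, f n j = qP q n ^ 2 := by
    intro n
    have hinj : Function.Injective (fun m : ℕ => (m : ℤ) - n) := by
      intro a b h; simpa using h
    rw [← hinj.tsum_eq, tsum_eq_sum (s := Finset.range (2 * n + 2)), finite_id r hr n]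
    · apply Finset.sum_congr rfl
      intro m _
      simp [f, hq]
    · intro m hm
      have : 2 * n + 1 < m := by simp at hm; omega
      simp [f, qG_gt q _ _ this]
    · intro j hj
      by_cases h : 0 ≤ j + n
      · exact ⟨(j + n).toNat, by simp [h]⟩
      · simp [f, h] at hj
  have hlim : Tendsto (fun n => ∑' j, f n j) atTop (𝓝 (∑' j, qF r j * E⁻¹)) := by
    refine tendsto_tsum_of_dominated_convergence (bound := fun j => ‖qF r j‖ * (A * B * B))
      (hs.mul_right _) ?_ ?_
    · intro j
      have e : (fun n : ℕ => qF r j * (qP q (2 * n + 1) * (qP q (j + n).toNat)⁻¹ *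
          (qP q (n + 1 - j).toNat)⁻¹)) =ᶠ[atTop] (f · j) := by
        filter_upwards [eventually_ge_atTop j.natAbs] with n hn
        have h : 0 ≤ j + n := by omega
        have := hG (j + n).toNat (n + 1 - j).toNat
        rw [show (j + n).toNat + (n + 1 - j).toNat = 2 * n + 1 by omega] at this
        simp only [f, h, if_true, this]
      refine Tendsto.congr' e ?_
      have ht1 : Tendsto (fun n : ℕ => 2 * n + 1) atTop atTop :=
        tendsto_atTop_mono (f := fun n : ℕ => n) (fun n => by omega) tendsto_id
      have ht2 : Tendsto (fun n : ℕ => (j + n).toNat) atTop atTop :=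
        tendsto_atTop_mono (f := fun n : ℕ => n - j.natAbs) (fun n => by omega)
          (tendsto_sub_atTop_nat _)
      have ht3 : Tendsto (fun n : ℕ => ((n : ℤ) + 1 - j).toNat) atTop atTop :=
        tendsto_atTop_mono (f := fun n : ℕ => n - j.natAbs) (fun n => by omega)
          (tendsto_sub_atTop_nat _)
      have := (((hPt.comp ht1).mul (hPi.comp ht2)).mul (hPi.comp ht3)).const_mul (qF r j)
      rw [mul_inv_cancel₀ hE0, one_mul] at this
      exact this
    · refine Eventually.of_forall fun n j => ?_
      by_cases h : 0 ≤ j + n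
      · simp only [f, h, if_true, norm_mul]
        gcongr
        exact hGb _ _
      · simp only [f, h, if_false, norm_zero]
        positivity
  simp only [hf] at hlim
  have := tendsto_nhds_unique hlim (hPt.pow 2)
  rw [tsum_mul_right] at this
  field_simp at this
  linear_combination -this

lemma summable_theta (τ z : ℂ) (hτ : 0 < τ.im) : Summable (fun n : ℤ =>
    (n : ℂ) * Complex.exp (2 * Real.pi * Complex.I * n * z + Real.pi * Complex.I * n ^ 2 * τ)) := by
  have h := (summable_jacobiTheta₂'_term_iff z τ).2 hτ
  have h2 : (2 * Real.pi * Complex.I : ℂ) ≠ 0 := by simp [Real.pi_ne_zero]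
  simp only [jacobiTheta₂'_term, jacobiTheta₂_term, mul_assoc (2 * Real.pi * Complex.I : ℂ)] at h
  rw [summable_mul_left_iff h2] at h
  simpa only [mul_assoc] using h

/-- `E₁(τ) = η(8τ)³ = ∑_{n ∈ ℤ} (4n+1) e^{2πiτ(4n+1)²}`, with absolute convergence. -/
theorem etaTheta_E1 (τ : ℂ) (hτ : 0 < τ.im) :
    Summable (fun n : ℤ =>
      ‖(4 * (n : ℂ) + 1) * Complex.exp (2 * (Real.pi : ℂ) * I * τ * (4 * (n : ℂ) + 1) ^ 2)‖) ∧
    dedekindEta (8 * τ) ^ 3 =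
      ∑' n : ℤ, (4 * (n : ℂ) + 1) *
        Complex.exp (2 * (Real.pi : ℂ) * I * τ * (4 * (n : ℂ) + 1) ^ 2) := by
  constructor
  · have h := summable_theta (2 * τ) 0 (by simpa using hτ)
    have hinj : Function.Injective (fun n : ℤ => 4 * n + 1) := by
      intro a b h; simpa using h
    refine ((h.comp_injective hinj).congr ?_).norm
    intro n
    simp only [Function.comp]
    push_cast
    congr 2
    ring
  set r : ℂ := cexp (8 * Real.pi * I * τ) with hrdef
  have hr : r ≠ 0 := Complex.exp_ne_zero _
  have h1 : ‖r‖ < 1 := by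
    rw [hrdef, Complex.norm_exp, Real.exp_lt_one_iff]
    have : (8 * Real.pi * I * τ : ℂ).re = -(8 * Real.pi * τ.im) := by
      simp
    rw [this]
    have := Real.pi_pos
    have : 0 < 8 * Real.pi * τ.im := by positivity
    linarith
  have hz : ∀ k : ℤ, r ^ k = cexp (8 * Real.pi * I * τ * k) := by
    intro k
    rw [hrdef, ← Complex.exp_int_mul]; congr 1; ring
  have hs : Summable (fun j => ‖qF r j‖) := by
    have h := (summable_theta (8 * τ) (-(4 * τ)) (by simpa using hτ)).norm
    refine h.congr ?_
    intro j
    rw [qF, norm_neg, norm_mul, norm_mul, norm_mul, hz, norm_zpow, norm_neg, norm_one, one_zpow,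
      mul_one]
    congr 3
    push_cast
    ring
  have hprod : ∏' n : ℕ, (1 - cexp (2 * (Real.pi : ℂ) * I * ((n : ℂ) + 1) * (8 * τ))) =
      ∏' n : ℕ, (1 - (r ^ 2) ^ (n + 1)) := by
    congr 1
    ext n
    rw [← pow_mul, ← zpow_natCast, hz]
    congr 2
    push_cast
    ring
  rw [dedekindEta, hprod, mul_pow, jacobi_cube r hr h1 hs, ← Complex.exp_nat_mul]
  have hs' : Summable (fun j => qF r j) := hs.of_norm
  have hi1 : Function.Injective (fun m : ℤ => -(2 * m)) := by intro a b h; simpa using h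
  have hi2 : Function.Injective (fun m : ℤ => 2 * m + 1) := by intro a b h; simpa using h
  have c1 := hs'.comp_injective hi1
  have c2 := hs'.comp_injective hi2
  have hc : IsCompl (Set.range (fun m : ℤ => -(2 * m))) (Set.range (fun m : ℤ => 2 * m + 1)) := by
    rw [isCompl_iff, Set.disjoint_left, codisjoint_iff]
    constructor
    · rintro _ ⟨a, rfl⟩ ⟨b, hb⟩
      simp only at hb
      omega
    · refine Set.eq_univ_of_forall fun x => ?_
      rcases Int.even_or_odd' x with ⟨k, hk | hk⟩
      · exact Or.inl ⟨-k, by dsimp only; omega⟩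
      · exact Or.inr ⟨k, by dsimp only; omega⟩
  have key := HasSum.add_isCompl (f := qF r) hc (hi1.hasSum_range_iff.2 c1.hasSum) (hi2.hasSum_range_iff.2 c2.hasSum)
  rw [key.tsum_eq, ← c1.tsum_add c2, ← tsum_mul_left]
  congr 1
  ext n
  have s1 : (-1 : ℂ) ^ (-(2 * n)) = 1 := Even.neg_one_zpow (by simp)
  have s2 : (-1 : ℂ) ^ (2 * n + 1) = -1 := Odd.neg_one_zpow (by simp)
  have e1 : (-(2 * n)) * (-(2 * n) - 1) = 2 * n * (2 * n + 1) := by ring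
  have e2 : (2 * n + 1) * (2 * n + 1 - 1) = 2 * n * (2 * n + 1) := by ring
  have e3 : cexp (2 * (Real.pi : ℂ) * I * τ * (4 * (n : ℂ) + 1) ^ 2) =
      cexp ((3 : ℕ) * (Real.pi * I * (8 * τ) / 12)) * r ^ (2 * n * (2 * n + 1)) := by
    rw [hz, ← Complex.exp_add]
    congr 1
    push_cast
    ring
  simp only [Function.comp, qF, s1, s2, e1, e2]
  rw [e3]
  push_cast
  ring
end

section
/- For every τ in the complex upper half-plane ℍ, one has η(16τ)⁹/(η(8τ)³·η(32τ)³) = ∑_{n∈ℤ} (−1)ⁿ(4n+1)·e^{2πiτ(4n+1)²}, where the series on the right converges absolutely. (This is the eta-theta identity E₂(τ) = η(16τ)⁹/(η(8τ)³η(32τ)³) = ∑_{n∈ℤ}(−1)ⁿ(4n+1)q^{(4n+1)²} with q = e^{2πiτ}.) -/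
open Complex

open Filter Topology

namespace EtaAux

noncomputable def PP (q : ℂ) (n : ℕ) : ℂ := ∏ i ∈ Finset.range n, (1 - q ^ (i + 1))

noncomputable def P (q : ℂ) : ℂ := ∏' n : ℕ, (1 - q ^ (n + 1))

noncomputable def r (q : ℂ) (m : ℤ) : ℂ := if 0 ≤ m then (PP q m.toNat)⁻¹ else 0

def T (k : ℤ) : ℤ := k * (k + 1) / 2

lemma two_T (k : ℤ) : 2 * T k = k * (k + 1) :=
  Int.mul_ediv_cancel' (Int.even_mul_succ_self k).two_dvd

lemma T_succ (k : ℤ) : T (k + 1) = T k + (k + 1) := by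
  have h1 := two_T k
  have h2 := two_T (k + 1)
  linarith

lemma T_pred (k : ℤ) : T (k - 1) = T k - k := by
  have h1 := two_T k
  have h2 := two_T (k - 1)
  linarith

lemma one_sub_ne {q : ℂ} (hq : ‖q‖ < 1) (i : ℕ) : 1 - q ^ (i + 1) ≠ 0 := by
  intro h
  have h1 : q ^ (i + 1) = 1 := (sub_eq_zero.mp h).symm
  have h2 : ‖q‖ ^ (i + 1) = 1 := by rw [← norm_pow, h1, norm_one]
  have h3 := pow_lt_one₀ (norm_nonneg q) hq (Nat.succ_ne_zero i)
  simp only [Nat.succ_eq_add_one] at h3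
  linarith

lemma PP_ne {q : ℂ} (hq : ‖q‖ < 1) (n : ℕ) : PP q n ≠ 0 :=
  Finset.prod_ne_zero_iff.mpr fun i _ => one_sub_ne hq i

lemma mult {q : ℂ} (hq : ‖q‖ < 1) : Multipliable fun n : ℕ ↦ 1 - q ^ (n + 1) := by
  apply multipliable_one_add_of_summable (f := fun n ↦ -q ^ (n + 1))
  simpa using (summable_nat_add_iff 1).mpr (summable_geometric_of_lt_one (norm_nonneg _) hq)

lemma P_ne {q : ℂ} (hq : ‖q‖ < 1) : P q ≠ 0 := by
  have := tprod_one_add_ne_zero_of_summable (f := fun n : ℕ ↦ -q ^ (n + 1)) (R := ℂ)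
    (fun i => by simpa [← sub_eq_add_neg] using one_sub_ne hq i)
    (by simpa using (summable_nat_add_iff 1).mpr (summable_geometric_of_lt_one (norm_nonneg _) hq))
  simpa [P, sub_eq_add_neg] using this

lemma PP_tendsto {q : ℂ} (hq : ‖q‖ < 1) : Tendsto (PP q) atTop (𝓝 (P q)) :=
  (mult hq).hasProd.tendsto_prod_nat

lemma r_pred {q : ℂ} (hq : ‖q‖ < 1) (m : ℤ) : r q (m - 1) = (1 - q ^ m) * r q m := by
  rcases lt_trichotomy m 0 with h | h | h
  · simp [r, show ¬ (0 ≤ m) by omega, show ¬ (1 ≤ m) by omega]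
  · subst h; simp [r]
  · obtain ⟨k, rfl⟩ : ∃ k : ℕ, m = k + 1 := ⟨(m - 1).toNat, by omega⟩
    have h1 : r q ((k : ℤ) + 1 - 1) = (PP q k)⁻¹ := by simp [r]
    have h2 : r q ((k : ℤ) + 1) = (PP q (k + 1))⁻¹ := by
      simp only [r, h.le, if_true]; rfl
    have h3 : PP q (k + 1) = PP q k * (1 - q ^ (k + 1)) := Finset.prod_range_succ _ _
    have h4 : q ^ ((k : ℤ) + 1) = q ^ (k + 1) := by exact_mod_cast zpow_natCast q (k + 1)
    rw [h1, h2, h3, h4]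
    have := PP_ne hq k
    have := one_sub_ne hq k
    field_simp

lemma r_tendsto {q : ℂ} (hq : ‖q‖ < 1) : Tendsto (fun n : ℕ => r q n) atTop (𝓝 (P q)⁻¹) := by
  have : (fun n : ℕ => r q n) = fun n => (PP q n)⁻¹ := by ext n; simp [r]
  rw [this]
  exact (PP_tendsto hq).inv₀ (P_ne hq)

lemma r_tendsto' {q : ℂ} (hq : ‖q‖ < 1) (c : ℤ) :
    Tendsto (fun n : ℕ => r q (n + c)) atTop (𝓝 (P q)⁻¹) := by
  have h1 : Tendsto (fun n : ℕ => ((n : ℤ) + c).toNat) atTop atTop := by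
    refine tendsto_atTop.mpr fun b => ?_
    filter_upwards [eventually_ge_atTop (b + c.natAbs)] with n hn
    omega
  refine ((r_tendsto hq).comp h1).congr' ?_
  filter_upwards [eventually_ge_atTop c.natAbs] with n hn
  simp only [Function.comp]
  congr 1
  omega

lemma r_bound {q : ℂ} (hq : ‖q‖ < 1) : ∃ C : ℝ, 0 ≤ C ∧ ∀ m : ℤ, ‖r q m‖ ≤ C := by
  obtain ⟨C, hC⟩ := (Metric.isBounded_range_of_tendsto _ (r_tendsto hq)).exists_norm_le
  have hC' : ∀ n : ℕ, ‖r q n‖ ≤ C := fun n => hC _ ⟨n, rfl⟩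
  have h0 : 0 ≤ C := (norm_nonneg _).trans (hC' 0)
  refine ⟨C, h0, fun m => ?_⟩
  by_cases h : 0 ≤ m
  · lift m to ℕ using h
    exact hC' m
  · simpa [r, h] using h0

/-- main theta term -/
noncomputable def th (q : ℂ) (k : ℤ) : ℂ := (-1) ^ k * q ^ T k * (2 * (k : ℂ) + 1)

lemma T_nat (n : ℕ) : (n : ℤ) ≤ T n := by
  have := two_T n
  nlinarith [sq_nonneg ((n : ℤ)), mul_nonneg (Int.natCast_nonneg n) (Int.natCast_nonneg n), show (n : ℤ) ≤ n * n by exact_mod_cast Nat.le_mul_self n]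

lemma th_refl (q : ℂ) (k : ℤ) : th q (-1 - k) = th q k := by
  have hT : T (-1 - k) = T k := by
    have h1 := two_T k
    have h2 := two_T (-1 - k)
    linarith
  have : (-1 : ℂ) ^ (-1 - k) = - (-1) ^ k := by
    rw [zpow_sub₀ (by norm_num), div_eq_mul_inv, ← inv_zpow]
    norm_num
  rw [th, th, hT, this]
  push_cast
  ring

lemma th_summable {q : ℂ} (hq0 : q ≠ 0) (hq : ‖q‖ < 1) : Summable fun k => ‖th q k‖ := by
  have key : Summable fun n : ℕ => ‖th q n‖ := by
    have hs : Summable fun n : ℕ => 2 * ((n : ℝ) ^ 1 * ‖q‖ ^ n) + ‖q‖ ^ n := by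
      refine Summable.add (Summable.mul_left _ ?_) (summable_geometric_of_lt_one (norm_nonneg _) hq)
      exact summable_pow_mul_geometric_of_norm_lt_one 1 (by simpa using hq)
    refine Summable.of_nonneg_of_le (fun _ => norm_nonneg _) (fun n => ?_) hs
    have h1 : ‖q ^ T n‖ ≤ ‖q‖ ^ n := by
      rw [norm_zpow, ← zpow_natCast]
      exact zpow_le_zpow_right_of_le_one₀ (norm_pos_iff.mpr hq0) hq.le (T_nat n)
    have h2 : ‖(2 * ((n : ℤ) : ℂ) + 1)‖ = 2 * n + 1 := by
      have : (2 * ((n : ℤ) : ℂ) + 1) = ((2 * n + 1 : ℕ) : ℂ) := by push_cast; ring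
      rw [this, Complex.norm_natCast]; push_cast; ring
    rw [th, norm_mul, norm_mul, norm_zpow, norm_neg, norm_one, one_zpow, one_mul, h2]
    have : (0 : ℝ) ≤ 2 * n + 1 := by positivity
    nlinarith [mul_le_mul_of_nonneg_right h1 this]
  refine Summable.of_nat_of_neg_add_one key ?_
  refine key.congr fun n => ?_
  rw [← th_refl]
  congr 2
  ring

noncomputable def g (q : ℂ) (n : ℕ) (k : ℤ) : ℂ :=
  (-1) ^ k * q ^ T k * (r q (n - k) * r q (n + k + 1))

noncomputable def f (q : ℂ) (n : ℕ) (k : ℤ) : ℂ := g q n k * (2 * (k : ℂ) + 1)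

lemma f_eq (q : ℂ) (n : ℕ) (k : ℤ) : f q n k = th q k * (r q (n - k) * r q (n + k + 1)) := by
  rw [f, g, th]; ring

lemma f_bound {q : ℂ} (hq : ‖q‖ < 1) : ∃ C : ℝ, ∀ n k, ‖f q n k‖ ≤ ‖th q k‖ * C := by
  obtain ⟨C, h0, hC⟩ := r_bound hq
  refine ⟨C * C, fun n k => ?_⟩
  rw [f_eq, norm_mul, norm_mul]
  exact mul_le_mul_of_nonneg_left (mul_le_mul (hC _) (hC _) (norm_nonneg _) h0) (norm_nonneg _)

lemma f_summable {q : ℂ} (hq0 : q ≠ 0) (hq : ‖q‖ < 1) (n : ℕ) : Summable (f q n) := by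
  obtain ⟨C, hC⟩ := f_bound hq
  exact Summable.of_norm_bounded ((th_summable hq0 hq).mul_right C) (hC n)

lemma g_summable {q : ℂ} (hq0 : q ≠ 0) (hq : ‖q‖ < 1) (n : ℕ) : Summable (g q n) := by
  refine Summable.of_norm_bounded (f_summable hq0 hq n).norm fun k => ?_
  rw [f, norm_mul]
  have : (1 : ℝ) ≤ ‖2 * (k : ℂ) + 1‖ := by
    have h : (2 * (k : ℂ) + 1) = ((2 * k + 1 : ℤ) : ℂ) := by push_cast; ring
    rw [h, Complex.norm_intCast]
    exact_mod_cast Int.one_le_abs (by omega)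
  exact le_mul_of_one_le_right (norm_nonneg _) this

lemma g_rec {q : ℂ} (hq0 : q ≠ 0) (hq : ‖q‖ < 1) (N : ℕ) (k : ℤ) :
    (1 - q ^ (2 * N + 2)) * (1 - q ^ (2 * N + 3)) * g q (N + 1) k =
      (1 + q ^ (2 * N + 2)) * g q N k - q ^ (N + 1) * g q N (k - 1)
        - q ^ (N + 1) * g q N (k + 1) := by
  have hm : (-1 : ℂ) ≠ 0 := by norm_num
  set a : ℤ := N + 1 - k with ha
  set b : ℤ := N + 1 + k + 1 with hb
  have e1 : r q (a - 1) = (1 - q ^ a) * r q a := r_pred hq a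
  have e2 : r q (a - 1 - 1) = (1 - q ^ (a - 1)) * r q (a - 1) := r_pred hq _
  have e3 : r q (b - 1) = (1 - q ^ b) * r q b := r_pred hq b
  have e4 : r q (b - 1 - 1) = (1 - q ^ (b - 1)) * r q (b - 1) := r_pred hq _
  have x1 : g q (N + 1) k = (-1) ^ k * q ^ T k * (r q a * r q b) := by
    rw [g]; push_cast; rfl
  have x2 : g q N k = (-1) ^ k * q ^ T k * (r q (a - 1) * r q (b - 1)) := by
    rw [g, show (N : ℤ) - k = a - 1 by omega, show (N : ℤ) + k + 1 = b - 1 by omega]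
  have x3 : g q N (k - 1) = (-1) ^ (k - 1) * q ^ T (k - 1) * (r q a * r q (b - 1 - 1)) := by
    rw [g, show (N : ℤ) - (k - 1) = a by omega, show (N : ℤ) + (k - 1) + 1 = b - 1 - 1 by omega]
  have x4 : g q N (k + 1) = (-1) ^ (k + 1) * q ^ T (k + 1) * (r q (a - 1 - 1) * r q b) := by
    rw [g, show (N : ℤ) - (k + 1) = a - 1 - 1 by omega, show (N : ℤ) + (k + 1) + 1 = b by omega]
  have p1 : q ^ T (k - 1) * q ^ (N + 1) = q ^ T k * q ^ a := by
    rw [T_pred, ← zpow_natCast, ← zpow_add₀ hq0, ← zpow_add₀ hq0]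
    congr 1; push_cast; simp only [ha]; ring
  have p2 : q ^ T (k + 1) * q ^ (N + 1) = q ^ T k * q ^ b := by
    rw [T_succ, ← zpow_natCast, ← zpow_add₀ hq0, ← zpow_add₀ hq0]
    congr 1; push_cast; simp only [hb]; ring
  have p3 : q ^ (2 * N + 3) = q ^ a * q ^ b := by
    rw [← zpow_natCast, ← zpow_add₀ hq0]
    congr 1; push_cast; simp only [ha, hb]; ring
  have p4 : q ^ (2 * N + 2) = q ^ a * q ^ b / q := by
    rw [← p3, pow_succ q (2 * N + 2)]; field_simp
  have s1 : (-1 : ℂ) ^ (k - 1) = - (-1) ^ k := by rw [zpow_sub_one₀ hm]; norm_num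
  have s2 : (-1 : ℂ) ^ (k + 1) = - (-1) ^ k := by rw [zpow_add_one₀ hm]; norm_num
  have q1 : q ^ (N + 1) * g q N (k - 1) = - (-1) ^ k * (q ^ T k * q ^ a) * (r q a * r q (b - 1 - 1)) := by
    rw [x3, s1, ← p1]; ring
  have q2 : q ^ (N + 1) * g q N (k + 1) = - (-1) ^ k * (q ^ T k * q ^ b) * (r q (a - 1 - 1) * r q b) := by
    rw [x4, s2, ← p2]; ring
  rw [q1, q2, x1, x2, e2, e4, e1, e3, p3, p4, zpow_sub_one₀ hq0, zpow_sub_one₀ hq0]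
  field_simp
  ring

lemma S_rec {q : ℂ} (hq0 : q ≠ 0) (hq : ‖q‖ < 1) (N : ℕ) :
    (1 - q ^ (2 * N + 2)) * (1 - q ^ (2 * N + 3)) * ∑' k, f q (N + 1) k =
      (1 - q ^ (N + 1)) ^ 2 * ∑' k, f q N k := by
  have hf := f_summable hq0 hq N
  have hg := g_summable hq0 hq N
  have h1 : HasSum (fun k : ℤ => g q N k * (2 * (k : ℂ) + 3)) (∑' k, f q N k + 2 * ∑' k, g q N k) := by
    refine (hf.hasSum.add (hg.hasSum.mul_left 2)).congr_fun ?_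
    intro k; rw [f]; ring
  have h2 : HasSum (fun k : ℤ => g q N k * (2 * (k : ℂ) - 1)) (∑' k, f q N k - 2 * ∑' k, g q N k) := by
    refine (hf.hasSum.sub (hg.hasSum.mul_left 2)).congr_fun ?_
    intro k; rw [f]; ring
  have h1' := (Equiv.subRight (1 : ℤ)).hasSum_iff.mpr h1
  have h2' := (Equiv.addRight (1 : ℤ)).hasSum_iff.mpr h2
  have h3 := ((hf.hasSum.mul_left (1 + q ^ (2 * N + 2))).sub (h1'.mul_left (q ^ (N + 1)))).sub
    (h2'.mul_left (q ^ (N + 1)))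
  have h4 := (f_summable hq0 hq (N + 1)).hasSum.mul_left
    ((1 - q ^ (2 * N + 2)) * (1 - q ^ (2 * N + 3)))
  have h5 := h4.unique (h3.congr_fun ?_)
  · rw [h5]; ring
  · intro k
    have := g_rec hq0 hq N k
    simp only [Function.comp, Equiv.subRight_apply, Equiv.coe_addRight, f]
    rw [← mul_assoc, this]
    push_cast
    ring

lemma S_zero {q : ℂ} : ∑' k, f q 0 k = 2 * (PP q 0) ^ 2 / PP q 1 := by
  rw [tsum_eq_sum (s := {0, -1})]
  · rw [Finset.sum_pair (by norm_num)]
    simp [f, g, T, r, PP]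
    ring
  · intro k hk
    simp only [Finset.mem_insert, Finset.mem_singleton, not_or] at hk
    rw [f_eq]
    by_cases h : 0 ≤ k
    · have : r q ((0 : ℕ) - k) = 0 := by
        rw [r, if_neg]; push_cast; omega
      rw [this]; ring
    · have : r q ((0 : ℕ) + k + 1) = 0 := by
        rw [r, if_neg]; push_cast; omega
      rw [this]; ring

lemma S_eq {q : ℂ} (hq0 : q ≠ 0) (hq : ‖q‖ < 1) (N : ℕ) :
    ∑' k, f q N k = 2 * (PP q N) ^ 2 / PP q (2 * N + 1) := by
  induction N with
  | zero => exact S_zero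
  | succ N ih =>
    have h := S_rec hq0 hq N
    rw [ih] at h
    have e1 : PP q (N + 1) = PP q N * (1 - q ^ (N + 1)) := Finset.prod_range_succ _ _
    have e2 : PP q (2 * (N + 1) + 1) = PP q (2 * N + 1) * (1 - q ^ (2 * N + 2)) * (1 - q ^ (2 * N + 3)) := by
      rw [show 2 * (N + 1) + 1 = 2 * N + 1 + 1 + 1 by ring, PP, Finset.prod_range_succ,
        Finset.prod_range_succ, ← PP]
    have n1 := PP_ne hq (2 * N + 1)
    have n2 : (1 - q ^ (2 * N + 2)) ≠ 0 := one_sub_ne hq (2 * N + 1)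
    have n3 : (1 - q ^ (2 * N + 3)) ≠ 0 := one_sub_ne hq (2 * N + 2)
    rw [e1, e2]
    apply mul_left_cancel₀ (mul_ne_zero n2 n3)
    rw [h]
    field_simp

lemma jacobi_full {q : ℂ} (hq0 : q ≠ 0) (hq : ‖q‖ < 1) : ∑' k, th q k = 2 * P q ^ 3 := by
  obtain ⟨C, hC⟩ := f_bound hq
  have hP := P_ne hq
  have h1 : Tendsto (fun n => ∑' k, f q n k) atTop (𝓝 (∑' k, th q k * ((P q)⁻¹ * (P q)⁻¹))) := by
    refine tendsto_tsum_of_dominated_convergence ((th_summable hq0 hq).mul_right C) ?_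
      (Eventually.of_forall hC)
    intro k
    simp only [f_eq]
    refine Tendsto.const_mul _ (Tendsto.mul ?_ ?_)
    · simpa [sub_eq_add_neg] using r_tendsto' hq (-k)
    · simpa [add_assoc] using r_tendsto' hq (k + 1)
  have h2 : Tendsto (fun n => ∑' k, f q n k) atTop (𝓝 (2 * P q ^ 2 / P q)) := by
    simp only [S_eq hq0 hq]
    refine Tendsto.div (((PP_tendsto hq).pow 2).const_mul 2) ((PP_tendsto hq).comp ?_) hP
    exact tendsto_atTop_mono (fun n => by simp only [id]; omega) tendsto_id
  have h3 := tendsto_nhds_unique h1 h2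
  rw [tsum_mul_right] at h3
  field_simp at h3
  rw [h3]; ring

lemma T_even (n : ℤ) : T (2 * n) = 2 * n ^ 2 + n := by
  have := two_T (2 * n)
  linarith

lemma th_even (q : ℂ) (n : ℤ) : th q (2 * n) = (4 * (n : ℂ) + 1) * q ^ (2 * n ^ 2 + n) := by
  rw [th, T_even, zpow_mul]
  push_cast
  norm_num
  ring

lemma inj2 : Function.Injective (fun n : ℤ => 2 * n) := fun a b h => by simpa using h

lemma jacobi {q : ℂ} (hq0 : q ≠ 0) (hq : ‖q‖ < 1) :
    HasSum (fun n : ℤ => (4 * (n : ℂ) + 1) * q ^ (2 * n ^ 2 + n)) (P q ^ 3) := by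
  have hs : Summable (th q) := (th_summable hq0 hq).of_norm
  have inj3 : Function.Injective (fun n : ℤ => -1 - 2 * n) := fun a b h => by
    simp only at h; omega
  have he : Summable (fun n : ℤ => th q (2 * n)) := hs.comp_injective inj2
  have ho : HasSum (fun n : ℤ => th q (-1 - 2 * n)) (∑' n : ℤ, th q (2 * n)) := by
    simpa only [th_refl] using he.hasSum
  have hr2 : IsCompl (Set.range (fun n : ℤ => 2 * n)) (Set.range (fun n : ℤ => -1 - 2 * n)) := by
    have : Set.range (fun n : ℤ => -1 - 2 * n) = (Set.range (fun n : ℤ => 2 * n))ᶜ := by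
      ext x
      simp only [Set.mem_range, Set.mem_compl_iff]
      constructor
      · rintro ⟨y, rfl⟩ ⟨z, hz⟩; omega
      · intro h
        rcases Int.even_or_odd' x with ⟨c, hc | hc⟩
        · exact absurd ⟨c, hc.symm⟩ h
        · exact ⟨-1 - c, by omega⟩
    rw [this]
    exact isCompl_compl
  have h1 : HasSum (th q ∘ ((↑) : Set.range (fun n : ℤ => 2 * n) → ℤ)) (∑' n : ℤ, th q (2 * n)) :=
    inj2.hasSum_range_iff.mpr he.hasSum
  have h2 : HasSum (th q ∘ ((↑) : Set.range (fun n : ℤ => -1 - 2 * n) → ℤ))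
      (∑' n : ℤ, th q (2 * n)) := inj3.hasSum_range_iff.mpr ho
  have h3 := h1.add_isCompl hr2 h2
  have h4 := h3.unique hs.hasSum
  rw [jacobi_full hq0 hq] at h4
  have h5 : ∑' n : ℤ, th q (2 * n) = P q ^ 3 := by linear_combination h4 / 2
  rw [← h5]
  simpa only [th_even] using he.hasSum

noncomputable def O (q : ℂ) : ℂ := ∏' n : ℕ, (1 - q ^ (2 * n + 1))

lemma multO {q : ℂ} (hq : ‖q‖ < 1) : Multipliable fun n : ℕ ↦ 1 - q ^ (2 * n + 1) := by
  apply multipliable_one_add_of_summable (f := fun n ↦ -q ^ (2 * n + 1))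
  have := (summable_geometric_of_lt_one (norm_nonneg _) hq).comp_injective
    (i := fun n : ℕ => 2 * n + 1) (fun a b h => by simp only at h; omega)
  simpa [Function.comp_def] using this

lemma norm_sq_lt {q : ℂ} (hq : ‖q‖ < 1) : ‖q ^ 2‖ < 1 := by
  rw [norm_pow]; exact pow_lt_one₀ (norm_nonneg _) hq (by norm_num)

lemma P_split {q : ℂ} (hq : ‖q‖ < 1) : P q = O q * P (q ^ 2) := by
  have hm := mult (norm_sq_lt hq)
  have e : ∀ n : ℕ, 1 - (q ^ 2) ^ (n + 1) = 1 - q ^ (2 * n + 1 + 1) := fun n => by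
    rw [← pow_mul]; ring_nf
  simp only [e] at hm
  have := tprod_even_mul_odd (f := fun n : ℕ => 1 - q ^ (n + 1)) (multO hq) hm
  rw [P, P, O, ← this]
  simp only [e]

lemma O_mul {q : ℂ} (hq : ‖q‖ < 1) : O q * O (-q) = O (q ^ 2) := by
  rw [O, O, O, ← (multO hq).tprod_mul (multO (by simpa using hq))]
  congr 1; ext n
  rw [Odd.neg_pow ⟨n, rfl⟩, ← pow_mul]
  ring

lemma P_neg {q : ℂ} (hq : ‖q‖ < 1) : P (-q) * (P q * P (q ^ 4)) = P (q ^ 2) ^ 3 := by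
  have h1 := P_split hq
  have h2 := P_split (q := -q) (by simpa using hq)
  have h3 := P_split (norm_sq_lt hq)
  rw [neg_sq] at h2
  rw [← pow_mul] at h3
  norm_num at h3
  have h4 := O_mul hq
  rw [← h4] at h3
  rw [h1, h2]
  linear_combination (- P (q^2) ^ 2) * h3

lemma eta_eq (τ : ℂ) : dedekindEta τ =
    Complex.exp ((Real.pi : ℂ) * I * τ / 12) * P (Complex.exp (2 * (Real.pi : ℂ) * I * τ)) := by
  rw [dedekindEta, P]
  congr 2
  ext n
  rw [← Complex.exp_nat_mul]
  congr 2
  push_cast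
  ring

end EtaAux

/-- `E₂(τ) = η(16τ)⁹/(η(8τ)³η(32τ)³) = ∑_{n ∈ ℤ} (−1)ⁿ(4n+1) e^{2πiτ(4n+1)²}`,
with absolute convergence. -/
theorem etaTheta_E2 (τ : ℂ) (hτ : 0 < τ.im) :
    Summable (fun n : ℤ =>
      ‖(-1 : ℂ) ^ n * (4 * (n : ℂ) + 1) *
        Complex.exp (2 * (Real.pi : ℂ) * I * τ * (4 * (n : ℂ) + 1) ^ 2)‖) ∧
    dedekindEta (16 * τ) ^ 9 / (dedekindEta (8 * τ) ^ 3 * dedekindEta (32 * τ) ^ 3) =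
      ∑' n : ℤ, (-1 : ℂ) ^ n * (4 * (n : ℂ) + 1) *
        Complex.exp (2 * (Real.pi : ℂ) * I * τ * (4 * (n : ℂ) + 1) ^ 2) := by
  set q : ℂ := Complex.exp (2 * (Real.pi : ℂ) * I * (8 * τ)) with hqdef
  have hq0 : q ≠ 0 := Complex.exp_ne_zero _
  have hq : ‖q‖ < 1 := by
    rw [hqdef, Complex.norm_exp, Real.exp_lt_one_iff]
    have : (2 * (Real.pi : ℂ) * I * (8 * τ)).re = -(16 * Real.pi * τ.im) := by
      simp [Complex.mul_re, Complex.mul_im]; ring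
    rw [this]
    have := Real.pi_pos
    have : 0 < 16 * Real.pi * τ.im := by positivity
    linarith
  have hterm : ∀ n : ℤ, (-1 : ℂ) ^ n * (4 * (n : ℂ) + 1) *
        Complex.exp (2 * (Real.pi : ℂ) * I * τ * (4 * (n : ℂ) + 1) ^ 2) =
      Complex.exp (2 * (Real.pi : ℂ) * I * τ) *
        ((4 * (n : ℂ) + 1) * (-q) ^ (2 * n ^ 2 + n)) := by
    intro n
    have h1 : (-q) ^ (2 * n ^ 2 + n) = (-1 : ℂ) ^ n * q ^ (2 * n ^ 2 + n) := by
      rw [neg_eq_neg_one_mul, mul_zpow, zpow_add₀ (by norm_num), zpow_mul]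
      norm_num
    have h2 : Complex.exp (2 * (Real.pi : ℂ) * I * τ * (4 * (n : ℂ) + 1) ^ 2) =
        Complex.exp (2 * (Real.pi : ℂ) * I * τ) * q ^ (2 * n ^ 2 + n) := by
      rw [hqdef, ← Complex.exp_int_mul, ← Complex.exp_add]
      congr 1
      push_cast
      ring
    rw [h1, h2]
    ring
  have hJ := (EtaAux.jacobi (q := -q) (neg_ne_zero.mpr hq0) (by simpa using hq)).mul_left
    (Complex.exp (2 * (Real.pi : ℂ) * I * τ))
  simp only [hterm]
  refine ⟨hJ.summable.norm, ?_⟩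
  rw [hJ.tsum_eq]
  have a1 : Complex.exp (2 * (Real.pi : ℂ) * I * (16 * τ)) = q ^ 2 := by
    rw [hqdef, ← Complex.exp_nat_mul]; congr 1; push_cast; ring
  have a2 : Complex.exp (2 * (Real.pi : ℂ) * I * (32 * τ)) = q ^ 4 := by
    rw [hqdef, ← Complex.exp_nat_mul]; congr 1; push_cast; ring
  have n1 := EtaAux.P_ne hq
  have n2 : EtaAux.P (q ^ 4) ≠ 0 := by
    apply EtaAux.P_ne
    rw [norm_pow]; exact pow_lt_one₀ (norm_nonneg _) hq (by norm_num)
  have hP := EtaAux.P_neg hq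
  rw [EtaAux.eta_eq, EtaAux.eta_eq, EtaAux.eta_eq, a1, a2, ← hqdef]
  have hE : Complex.exp ((Real.pi : ℂ) * I * (16 * τ) / 12) ^ 9 =
      Complex.exp (2 * (Real.pi : ℂ) * I * τ) *
        (Complex.exp ((Real.pi : ℂ) * I * (8 * τ) / 12) ^ 3 *
          Complex.exp ((Real.pi : ℂ) * I * (32 * τ) / 12) ^ 3) := by
    rw [← Complex.exp_nat_mul, ← Complex.exp_nat_mul, ← Complex.exp_nat_mul, ← Complex.exp_add,
      ← Complex.exp_add]
    congr 1
    push_cast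
    ring
  have m1 := Complex.exp_ne_zero ((Real.pi : ℂ) * I * (8 * τ) / 12)
  have m2 := Complex.exp_ne_zero ((Real.pi : ℂ) * I * (32 * τ) / 12)
  rw [div_eq_iff (mul_ne_zero (pow_ne_zero _ (mul_ne_zero m1 n1))
    (pow_ne_zero _ (mul_ne_zero m2 n2))), mul_pow, hE,
    show EtaAux.P (q ^ 2) ^ 9 = (EtaAux.P (q ^ 2) ^ 3) ^ 3 by ring, ← hP]
  ring
end

section
/- Let τ ∈ ℍ and let b ∈ ℝ with 2b ∉ ℤ. Then the integral of g_{1, b+1/2}(z)/√(−i(z+τ)) along the vertical path from −conj(τ) to i∞ converges and equals −i·e(−τ/8 + b/2)·R(τ/2 − b; τ) + i. That is, i·∫₀^∞ g_{1,b+1/2}(−conj(τ)+it)/√(−i(−conj(τ)+it+τ)) dt = −i·e^{2πi(−τ/8 + b/2)}·R(τ/2 − b; τ) + i. -/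
open Complex

/-- Zwegers' unary theta function
`g_{a,b}(τ) = ∑_{n∈ℤ} (n+a) e^{2πib(n+a)} e^{πiτ(n+a)²}`. -/
noncomputable def gUnary (a b : ℝ) (τ : ℂ) : ℂ :=
  ∑' n : ℤ, ((n : ℂ) + a) * Complex.exp (2 * (Real.pi : ℂ) * I * b * ((n : ℂ) + a)) *
    Complex.exp ((Real.pi : ℂ) * I * τ * ((n : ℂ) + a) ^ 2)

/-- Zwegers' nonholomorphic completion term
`R(u;τ) = ∑_{ν ∈ 1/2+ℤ} {sgn ν − 2∫₀^{(ν+α)√(2y)} e^{−πt²} dt} (−1)^{ν−1/2} e^{−πiν²τ−2πiνu}`,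
with `y = Im τ`, `α = Im u / Im τ`, indexed by `ν = n + 1/2`, `n ∈ ℤ`. -/
noncomputable def Rzw (u τ : ℂ) : ℂ :=
  ∑' n : ℤ,
    (((Real.sign ((n : ℝ) + 1/2) -
        2 * ∫ t in (0:ℝ)..(((n : ℝ) + 1/2 + u.im / τ.im) * Real.sqrt (2 * τ.im)),
          Real.exp (-Real.pi * t ^ 2)) : ℝ) : ℂ) *
      (-1 : ℂ) ^ n *
      Complex.exp (-(Real.pi : ℂ) * I * ((n : ℂ) + 1/2) ^ 2 * τ -
        2 * (Real.pi : ℂ) * I * ((n : ℂ) + 1/2) * u)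

open MeasureTheory Filter Topology

/-- The Gaussian primitive. -/
lemma gauss_prim_tendsto (m : ℝ) (hm : m ≠ 0) (y : ℝ) :
    Tendsto (fun t : ℝ => ∫ v in (0:ℝ)..(m * Real.sqrt (2 * y + t)), Real.exp (-Real.pi * v ^ 2))
      atTop (𝓝 (Real.sign m / 2)) := by
  have hs : Tendsto (fun t : ℝ => Real.sqrt (2 * y + t)) atTop atTop :=
    Real.tendsto_sqrt_atTop.comp (tendsto_atTop_add_const_left _ _ tendsto_id)
  have hint : Integrable (fun v : ℝ => Real.exp (-Real.pi * v ^ 2)) :=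
    integrable_exp_neg_mul_sq Real.pi_pos
  have hval : ∫ v in Set.Ioi (0:ℝ), Real.exp (-Real.pi * v ^ 2) = 1 / 2 := by
    rw [integral_gaussian_Ioi, div_self Real.pi_ne_zero, Real.sqrt_one]
  have key : ∀ k : ℝ, 0 < k → Tendsto (fun t : ℝ => ∫ v in (0:ℝ)..(k * Real.sqrt (2 * y + t)),
      Real.exp (-Real.pi * v ^ 2)) atTop (𝓝 (1 / 2)) := by
    intro k hk
    rw [← hval]
    exact intervalIntegral_tendsto_integral_Ioi 0 hint.integrableOn (hs.const_mul_atTop hk)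
  rcases lt_or_gt_of_ne hm with h | h
  · rw [Real.sign_of_neg h]
    have h1 := (key (-m) (by linarith)).neg
    convert h1 using 2
    · rename_i t
      have h2 := intervalIntegral.integral_comp_neg (a := 0) (b := m * Real.sqrt (2 * y + t))
        (fun v : ℝ => Real.exp (-Real.pi * v ^ 2))
      simp only [neg_sq, neg_zero] at h2
      rw [h2, intervalIntegral.integral_symm, neg_mul]
    · norm_num
  · rw [Real.sign_of_pos h]
    exact key m h

lemma kern_integrable (m y : ℝ) (hm : m ≠ 0) (hy : 0 < y) :
    IntegrableOn (fun t : ℝ => Real.exp (-Real.pi * m ^ 2 * t) / Real.sqrt (2 * y + t))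
      (Set.Ioi 0) := by
  have hm2 : 0 < m ^ 2 := by positivity
  have h := (integrableOn_exp_mul_Ioi (a := -Real.pi * m ^ 2)
    (by nlinarith [Real.pi_pos]) 0).div_const (Real.sqrt (2 * y))
  refine Integrable.mono' h ?_ ?_
  · exact Measurable.aestronglyMeasurable (by fun_prop)
  · filter_upwards [ae_restrict_mem measurableSet_Ioi] with t ht
    have ht : 0 < t := ht
    rw [Real.norm_of_nonneg (by positivity)]
    gcongr
    linarith

lemma kern_integral (m y : ℝ) (hm : m ≠ 0) (hy : 0 < y) :
    m * ∫ t in Set.Ioi (0:ℝ), Real.exp (-Real.pi * m ^ 2 * t) / Real.sqrt (2 * y + t) =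
      Real.exp (2 * Real.pi * y * m ^ 2) * (Real.sign m -
        2 * ∫ v in (0:ℝ)..(m * Real.sqrt (2 * y)), Real.exp (-Real.pi * v ^ 2)) := by
  have hlim := gauss_prim_tendsto m hm y
  have hder : ∀ t ∈ Set.Ici (0:ℝ), HasDerivAt
      (fun t : ℝ => ∫ v in (0:ℝ)..(m * Real.sqrt (2 * y + t)), Real.exp (-Real.pi * v ^ 2))
      ((m / 2 * Real.exp (-(2 * Real.pi * y * m ^ 2))) *
        (Real.exp (-Real.pi * m ^ 2 * t) / Real.sqrt (2 * y + t))) t := by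
    intro t ht
    have ht : 0 ≤ t := ht
    have hpos : 0 < 2 * y + t := by linarith
    have hc : Continuous (fun v : ℝ => Real.exp (-Real.pi * v ^ 2)) := by fun_prop
    have h1 : HasDerivAt (fun x : ℝ => ∫ v in (0:ℝ)..x, Real.exp (-Real.pi * v ^ 2))
        (Real.exp (-Real.pi * (m * Real.sqrt (2 * y + t)) ^ 2)) (m * Real.sqrt (2 * y + t)) :=
      intervalIntegral.integral_hasDerivAt_right (hc.intervalIntegrable _ _)
        (hc.stronglyMeasurableAtFilter _ _) hc.continuousAt
    have h2 : HasDerivAt (fun t : ℝ => m * Real.sqrt (2 * y + t))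
        (m * (1 / (2 * Real.sqrt (2 * y + t)))) t :=
      (((hasDerivAt_id t).const_add (2 * y)).sqrt hpos.ne').const_mul m
    refine (h1.comp t h2).congr_deriv ?_
    rw [mul_pow, Real.sq_sqrt hpos.le]
    have : Real.exp (-Real.pi * (m ^ 2 * (2 * y + t))) =
        Real.exp (-(2 * Real.pi * y * m ^ 2)) * Real.exp (-Real.pi * m ^ 2 * t) := by
      rw [← Real.exp_add]; congr 1; ring
    rw [this]
    field_simp
  have h := integral_Ioi_of_hasDerivAt_of_tendsto' hder
    ((kern_integrable m y hm hy).const_mul _) hlim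
  rw [integral_const_mul, add_zero] at h
  have he : Real.exp (2 * Real.pi * y * m ^ 2) * Real.exp (-(2 * Real.pi * y * m ^ 2)) = 1 := by
    rw [← Real.exp_add]; simp
  linear_combination (2 * Real.exp (2 * Real.pi * y * m ^ 2)) * h -
    (m * ∫ t in Set.Ioi (0:ℝ), Real.exp (-Real.pi * m ^ 2 * t) / Real.sqrt (2 * y + t)) * he

/-- Coefficients. -/
noncomputable def cCoef (τ : ℂ) (b : ℝ) (n : ℤ) : ℂ :=
  ((n : ℂ) + (1:ℝ)) * Complex.exp (2 * (Real.pi : ℂ) * I * (b + 1/2 : ℝ) * ((n : ℂ) + (1:ℝ))) *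
    Complex.exp ((Real.pi : ℂ) * I * (-(starRingEnd ℂ) τ) * ((n : ℂ) + (1:ℝ)) ^ 2)

lemma cCoef_summable (τ : ℂ) (hτ : 0 < τ.im) (b : ℝ) : Summable (fun n => ‖cCoef τ b n‖) := by
  have h := summable_pow_mul_jacobiTheta₂_term_bound 0 hτ 1
  have h' := (Equiv.addRight (1:ℤ)).summable_iff.mpr h
  refine h'.congr fun n => ?_
  have e1 : ((n:ℂ) + (1:ℝ)) = (((n:ℝ) + 1 : ℝ) : ℂ) := by push_cast; ring
  simp only [cCoef, Function.comp, Equiv.coe_addRight]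
  rw [e1, norm_mul, norm_mul, Complex.norm_exp, Complex.norm_exp, Complex.norm_real]
  have a1 : (2 * (Real.pi : ℂ) * I * (b + 1/2 : ℝ) * (((n:ℝ) + 1 : ℝ) : ℂ)).re = 0 := by
    have : 2 * (Real.pi : ℂ) * I * (b + 1/2 : ℝ) * (((n:ℝ) + 1 : ℝ) : ℂ) =
      ((2 * Real.pi * (b + 1/2) * (n + 1) : ℝ) : ℂ) * I := by push_cast; ring
    rw [this, Complex.re_ofReal_mul, Complex.I_re, mul_zero]
  have a2 : ((Real.pi : ℂ) * I * (-(starRingEnd ℂ) τ) * (((n:ℝ) + 1 : ℝ) : ℂ) ^ 2).re =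
      -Real.pi * (τ.im * (n + 1) ^ 2) := by
    have : (Real.pi : ℂ) * I * (-(starRingEnd ℂ) τ) * (((n:ℝ) + 1 : ℝ) : ℂ) ^ 2 =
      ((Real.pi * (n + 1)^2 : ℝ) : ℂ) * (I * (-(starRingEnd ℂ) τ)) := by push_cast; ring
    rw [this, Complex.re_ofReal_mul]
    simp
    ring
  rw [a1, a2]
  simp

lemma kern_bound (τ : ℂ) (hτ : 0 < τ.im) (b : ℝ) (n : ℤ) (t : ℝ) (ht : 0 < t) :
    ‖cCoef τ b n * ((Real.exp (-Real.pi * ((n:ℝ) + 1) ^ 2 * t) /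
      Real.sqrt (2 * τ.im + t) : ℝ) : ℂ)‖ ≤
      ‖cCoef τ b n‖ * (Real.exp (-Real.pi * t) / Real.sqrt (2 * τ.im)) := by
  by_cases hn : n = -1
  · subst hn; simp [cCoef]
  have h1 : (1:ℝ) ≤ ((n:ℝ) + 1) ^ 2 := by
    have : n + 1 ≠ 0 := by omega
    have : 1 ≤ (n + 1) ^ 2 := by
      have := sq_pos_of_ne_zero this
      omega
    exact_mod_cast this
  rw [norm_mul, Complex.norm_real, Real.norm_of_nonneg (by positivity)]
  gcongr
  · nlinarith [mul_pos Real.pi_pos ht]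
  · linarith

lemma integrand_eq (τ : ℂ) (hτ : 0 < τ.im) (b : ℝ) (t : ℝ) (ht : 0 < t) :
    gUnary 1 (b + 1/2) (-(starRingEnd ℂ) τ + I * t) /
        ((-I * (-(starRingEnd ℂ) τ + I * t + τ)) ^ ((1 : ℂ)/2)) =
    ∑' n : ℤ, cCoef τ b n * ((Real.exp (-Real.pi * ((n:ℝ) + 1) ^ 2 * t) /
      Real.sqrt (2 * τ.im + t) : ℝ) : ℂ) := by
  have hd : ((-I * (-(starRingEnd ℂ) τ + I * t + τ)) ^ ((1 : ℂ)/2)) =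
      ((Real.sqrt (2 * τ.im + t) : ℝ) : ℂ) := by
    have e : -I * (-(starRingEnd ℂ) τ + I * t + τ) = ((2 * τ.im + t : ℝ) : ℂ) := by
      apply Complex.ext <;> simp
      ring
    rw [e, Real.sqrt_eq_rpow, Complex.ofReal_cpow (by linarith)]
    norm_num
  rw [hd, gUnary, ← tsum_div_const]
  refine tsum_congr fun n => ?_
  rw [Complex.ofReal_div, ← mul_div_assoc]
  congr 1
  rw [cCoef, mul_assoc _ (Complex.exp _) (Complex.ofReal _), Complex.ofReal_exp, ← Complex.exp_add]
  congr 2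
  push_cast
  linear_combination (Real.pi : ℂ) * t * ((n:ℂ) + 1) ^ 2 * Complex.I_sq

lemma term_eq (τ : ℂ) (hτ : 0 < τ.im) (b : ℝ) (n : ℤ) :
    Complex.exp (2 * (Real.pi : ℂ) * I * (-τ/8 + (b : ℂ)/2)) *
    ((((Real.sign ((n : ℝ) + 1/2) -
        2 * ∫ t in (0:ℝ)..(((n : ℝ) + 1/2 + (τ/2 - (b : ℂ)).im / τ.im) * Real.sqrt (2 * τ.im)),
          Real.exp (-Real.pi * t ^ 2)) : ℝ) : ℂ) *
      (-1 : ℂ) ^ n *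
      Complex.exp (-(Real.pi : ℂ) * I * ((n : ℂ) + 1/2) ^ 2 * τ -
        2 * (Real.pi : ℂ) * I * ((n : ℂ) + 1/2) * (τ/2 - (b : ℂ)))) =
    -(∫ t in Set.Ioi (0:ℝ), cCoef τ b n * ((Real.exp (-Real.pi * ((n:ℝ) + 1) ^ 2 * t) /
      Real.sqrt (2 * τ.im + t) : ℝ) : ℂ)) + if n = -1 then 1 else 0 := by
  have him : (n : ℝ) + 1/2 + (τ/2 - (b : ℂ)).im / τ.im = n + 1 := by
    have : (τ/2 - (b : ℂ)).im = τ.im / 2 := by simp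
    rw [this]; field_simp; ring
  rw [him]
  have hexp : Complex.exp (2 * (Real.pi : ℂ) * I * (-τ/8 + (b : ℂ)/2)) *
      Complex.exp (-(Real.pi : ℂ) * I * ((n : ℂ) + 1/2) ^ 2 * τ -
        2 * (Real.pi : ℂ) * I * ((n : ℂ) + 1/2) * (τ/2 - (b : ℂ))) =
      Complex.exp (-(Real.pi : ℂ) * I * τ * ((n:ℂ) + 1) ^ 2 +
        2 * (Real.pi : ℂ) * I * b * ((n:ℂ) + 1)) := by
    rw [← Complex.exp_add]; congr 1; ring
  rw [mul_left_comm, hexp]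
  by_cases hn : n = -1
  · subst hn
    have : Real.sign (-1 + 2⁻¹) = -1 := Real.sign_of_neg (by norm_num)
    simp [cCoef, this]
  rw [if_neg hn, add_zero]
  have hm : (n:ℝ) + 1 ≠ 0 := by
    intro h; apply hn; have : ((n + 1 : ℤ) : ℝ) = 0 := by exact_mod_cast h
    have := Int.cast_eq_zero.mp this
    omega
  have hsign : Real.sign ((n:ℝ) + 1/2) = Real.sign ((n:ℝ) + 1) := by
    rcases lt_or_ge n (-1) with h | h
    · have : (n:ℝ) ≤ -2 := by exact_mod_cast (by omega : n ≤ -2)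
      rw [Real.sign_of_neg (by linarith), Real.sign_of_neg (by linarith)]
    · have : (0:ℝ) ≤ n := by exact_mod_cast (by omega : 0 ≤ n)
      rw [Real.sign_of_pos (by linarith), Real.sign_of_pos (by linarith)]
  have hk := kern_integral ((n:ℝ) + 1) τ.im hm hτ
  rw [hsign, integral_const_mul, integral_complex_ofReal]
  have hk' := congrArg (fun x : ℝ => (x : ℂ)) hk
  simp only [Complex.ofReal_mul, Complex.ofReal_exp] at hk'
  set S : ℝ := Real.sign ((n:ℝ) + 1) -
    2 * ∫ v in (0:ℝ)..(((n:ℝ) + 1) * Real.sqrt (2 * τ.im)), Real.exp (-Real.pi * v ^ 2) with hS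
  set J : ℝ := ∫ t in Set.Ioi (0:ℝ), Real.exp (-Real.pi * ((n:ℝ) + 1) ^ 2 * t) /
    Real.sqrt (2 * τ.im + t) with hJ
  have hpar : Complex.exp (2 * (Real.pi : ℂ) * I * (b + 1/2 : ℝ) * ((n : ℂ) + (1:ℝ))) =
      -(-1 : ℂ) ^ n * Complex.exp (2 * (Real.pi : ℂ) * I * b * ((n:ℂ) + 1)) := by
    have h1 : (-(-1 : ℂ) ^ n) = Complex.exp (((n + 1 : ℤ) : ℂ) * (Real.pi * I)) := by
      rw [Complex.exp_int_mul, Complex.exp_pi_mul_I, zpow_add₀ (by norm_num)]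
      simp
    rw [h1, ← Complex.exp_add]; congr 1; push_cast; ring
  have hx : (starRingEnd ℂ) τ = τ - 2 * τ.im * I := by
    apply Complex.ext <;> simp
    ring
  have hfin : Complex.exp ((Real.pi : ℂ) * I * (-(starRingEnd ℂ) τ) * ((n : ℂ) + (1:ℝ)) ^ 2) *
      Complex.exp ((2 * Real.pi * τ.im * ((n:ℝ) + 1) ^ 2 : ℝ) : ℂ) =
      Complex.exp (-(Real.pi : ℂ) * I * τ * ((n:ℂ) + 1) ^ 2) := by
    rw [← Complex.exp_add, hx]; congr 1; push_cast
    linear_combination (2 * (Real.pi : ℂ) * τ.im * ((n:ℂ) + 1) ^ 2) * Complex.I_sq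
  rw [cCoef, hpar, Complex.exp_add, ← hfin]
  simp only [Complex.ofReal_mul, Complex.ofReal_add, Complex.ofReal_one, Complex.ofReal_intCast, Complex.ofReal_pow] at hk' ⊢
  linear_combination (-(-1 : ℂ) ^ n * Complex.exp (2 * (Real.pi : ℂ) * I * b * ((n:ℂ) + 1)) *
    Complex.exp ((Real.pi : ℂ) * I * (-(starRingEnd ℂ) τ) * ((n : ℂ) + 1) ^ 2)) * hk'

/-- Lemma 2.7(i): for `b ∈ ℝ` with `2b ∉ ℤ` and `τ ∈ ℍ`,
`∫_{-τ̄}^{i∞} g_{1,b+1/2}(z)/√(−i(z+τ)) dz = −i e(−τ/8 + b/2) R(τ/2 − b; τ) + i`. -/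
theorem eichler_g1_R (τ : ℂ) (hτ : 0 < τ.im) (b : ℝ) (hb : ∀ m : ℤ, 2 * b ≠ (m : ℝ)) :
    MeasureTheory.IntegrableOn
      (fun t : ℝ => gUnary 1 (b + 1/2) (-(starRingEnd ℂ) τ + I * t) /
        ((-I * (-(starRingEnd ℂ) τ + I * t + τ)) ^ ((1 : ℂ)/2))) (Set.Ioi 0) ∧
    I * ∫ t in Set.Ioi (0 : ℝ),
        gUnary 1 (b + 1/2) (-(starRingEnd ℂ) τ + I * t) /
          ((-I * (-(starRingEnd ℂ) τ + I * t + τ)) ^ ((1 : ℂ)/2)) =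
      -I * Complex.exp (2 * (Real.pi : ℂ) * I * (-τ/8 + (b : ℂ)/2)) *
        Rzw (τ/2 - (b : ℂ)) τ + I := by
  
  have hsum := cCoef_summable τ hτ b
  have heq : Set.EqOn (fun t : ℝ => gUnary 1 (b + 1/2) (-(starRingEnd ℂ) τ + I * t) /
        ((-I * (-(starRingEnd ℂ) τ + I * t + τ)) ^ ((1 : ℂ)/2)))
      (fun t : ℝ => ∑' n : ℤ, cCoef τ b n * ((Real.exp (-Real.pi * ((n:ℝ) + 1) ^ 2 * t) /
      Real.sqrt (2 * τ.im + t) : ℝ) : ℂ)) (Set.Ioi 0) :=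
    fun t ht => integrand_eq τ hτ b t ht
  have hbi : IntegrableOn (fun t : ℝ => Real.exp (-Real.pi * t) / Real.sqrt (2 * τ.im))
      (Set.Ioi 0) :=
    (integrableOn_exp_mul_Ioi (by linarith [Real.pi_pos]) 0).div_const _
  have hcont : ∀ n : ℤ, ContinuousOn (fun t : ℝ => cCoef τ b n *
      ((Real.exp (-Real.pi * ((n:ℝ) + 1) ^ 2 * t) / Real.sqrt (2 * τ.im + t) : ℝ) : ℂ))
      (Set.Ioi 0) := by
    intro n
    refine continuousOn_const.mul (Complex.continuous_ofReal.comp_continuousOn ?_)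
    refine ContinuousOn.div (by fun_prop) (by fun_prop) ?_
    intro t ht
    have ht : 0 < t := ht
    exact (Real.sqrt_pos.mpr (by linarith)).ne'
  refine ⟨?_, ?_⟩
  · refine (integrableOn_congr_fun heq measurableSet_Ioi).mpr ?_
    refine Integrable.mono' (hbi.const_mul (∑' n, ‖cCoef τ b n‖)) ?_ ?_
    · refine ContinuousOn.aestronglyMeasurable ?_ measurableSet_Ioi
      refine continuousOn_tsum hcont (hsum.mul_right (1 / Real.sqrt (2 * τ.im))) ?_
      intro n t ht
      have ht : 0 < t := ht
      refine (kern_bound τ hτ b n t ht).trans ?_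
      gcongr
      rw [Real.exp_le_one_iff]
      nlinarith [Real.pi_pos]
    · filter_upwards [ae_restrict_mem measurableSet_Ioi] with t ht
      exact tsum_of_norm_bounded (hsum.hasSum.mul_right _) fun n => kern_bound τ hτ b n t ht
  · rw [setIntegral_congr_fun measurableSet_Ioi heq]
    have hS := hasSum_integral_of_dominated_convergence (μ := volume.restrict (Set.Ioi (0:ℝ)))
      (F := fun (n : ℤ) (t : ℝ) => cCoef τ b n *
        ((Real.exp (-Real.pi * ((n:ℝ) + 1) ^ 2 * t) / Real.sqrt (2 * τ.im + t) : ℝ) : ℂ))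
      (f := fun t : ℝ => ∑' n : ℤ, cCoef τ b n *
        ((Real.exp (-Real.pi * ((n:ℝ) + 1) ^ 2 * t) / Real.sqrt (2 * τ.im + t) : ℝ) : ℂ))
      (fun n t => ‖cCoef τ b n‖ * (Real.exp (-Real.pi * t) / Real.sqrt (2 * τ.im)))
      (fun n => (hcont n).aestronglyMeasurable measurableSet_Ioi)
      (fun n => by
        filter_upwards [ae_restrict_mem measurableSet_Ioi] with t ht
        exact kern_bound τ hτ b n t ht)
      (ae_of_all _ fun t => hsum.mul_right _)
      (by
        simp_rw [tsum_mul_right]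
        exact hbi.const_mul _)
      (by
        filter_upwards [ae_restrict_mem measurableSet_Ioi] with t ht
        exact (Summable.of_norm_bounded (hsum.mul_right _)
          fun n => kern_bound τ hτ b n t ht).hasSum)
    have hR := hS.neg.add (hasSum_ite_eq (-1 : ℤ) (1 : ℂ))
    rw [mul_assoc, Rzw, ← tsum_mul_left, tsum_congr (term_eq τ hτ b), hR.tsum_eq]
    ring
end

section
/- Let τ ∈ ℍ and let b ∈ (−1/2, 1/2) with b ≠ 0. Then the integral of g_{1, b+1/2}(z)/√(−i(z+τ)) along the vertical path from 0 to i∞ converges and equals −i·e(−τ/8 + b/2)·h(τ/2 − b; τ) + i. That is, i·∫₀^∞ g_{1,b+1/2}(it)/√(−i(it+τ)) dt = −i·e^{2πi(−τ/8 + b/2)}·h(τ/2 − b; τ) + i. -/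
open Complex

/-- The Mordell integral `h(u;τ) = ∫_ℝ e^{πiτx² − 2πux}/cosh(πx) dx`. -/
noncomputable def mordellH (u τ : ℂ) : ℂ :=
  ∫ x : ℝ, Complex.exp ((Real.pi : ℂ) * I * τ * (x : ℂ) ^ 2 - 2 * (Real.pi : ℂ) * u * x) /
    Complex.cosh ((Real.pi : ℂ) * x)

open MeasureTheory Set

lemma levy_aux (c x : ℝ) (hc : 0 < c) (hx : 0 < x) :
    IntegrableOn (fun t : ℝ => c / (t * √t) * Real.exp (-Real.pi * (x * √t - c / √t) ^ 2)) (Ioi 0) ∧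
    ∫ t in Ioi (0:ℝ), c / (t * √t) * Real.exp (-Real.pi * (x * √t - c / √t) ^ 2) = 1 := by
  set u : ℝ → ℝ := fun t => x * √t - c / √t with hu
  set u' : ℝ → ℝ := fun t => x / (2 * √t) + c / (2 * (t * √t)) with hu'
  have hder : ∀ t ∈ Ioi (0:ℝ), HasDerivWithinAt u (u' t) (Ioi 0) t := by
    intro t ht
    have ht' : 0 < t := ht
    have hs : 0 < √t := Real.sqrt_pos.2 ht'
    have h1 := Real.hasDerivAt_sqrt ht'.ne'
    have h2 := (h1.const_mul x).sub ((hasDerivAt_const t c).div h1 hs.ne')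
    refine (h2.congr_deriv ?_).hasDerivWithinAt
    simp only [hu']
    have : √t ^ 2 = t := Real.sq_sqrt ht'.le
    rw [this]
    field_simp
    ring
  have hmono : StrictMonoOn u (Ioi 0) := by
    intro s hs t ht hst
    have hs' : 0 < √s := Real.sqrt_pos.2 hs
    have hst' : √s < √t := Real.sqrt_lt_sqrt (le_of_lt hs) hst
    have h1 : x * √s < x * √t := by gcongr
    have h2 : c / √t < c / √s := by gcongr
    simp only [hu]; linarith
  have himg : u '' Ioi 0 = univ := by
    refine eq_univ_of_forall fun y => ?_
    set D := √(y ^ 2 + 4 * x * c) with hD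
    have hxc : 0 < x * c := by positivity
    have hD2 : D ^ 2 = y ^ 2 + 4 * x * c := Real.sq_sqrt (by nlinarith [sq_nonneg y])
    have hDy : |y| < D := by
      rw [hD, ← Real.sqrt_sq_eq_abs]
      exact Real.sqrt_lt_sqrt (sq_nonneg y) (by nlinarith)
    have hpos : 0 < (y + D) / (2 * x) := by
      have := neg_abs_le y
      apply div_pos <;> linarith
    refine ⟨((y + D) / (2 * x)) ^ 2, by simp only [mem_Ioi]; positivity, ?_⟩
    simp only [hu]
    rw [Real.sqrt_sq hpos.le]
    have : y + D ≠ 0 := fun h => by simp [h] at hpos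
    field_simp
    nlinarith
  have hg : Integrable (fun y : ℝ => Real.exp (-Real.pi * y ^ 2)) := integrable_exp_neg_mul_sq Real.pi_pos
  have hgi : ∫ y : ℝ, Real.exp (-Real.pi * y ^ 2) = 1 := by
    rw [integral_gaussian, div_self Real.pi_ne_zero, Real.sqrt_one]
  have habs : ∀ t ∈ Ioi (0:ℝ), |u' t| = u' t := by
    intro t ht
    have ht' : 0 < t := ht
    apply abs_of_nonneg; simp only [hu']; positivity
  have hI1 : IntegrableOn (fun t => u' t * Real.exp (-Real.pi * (u t) ^ 2)) (Ioi 0) := by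
    have := (integrableOn_image_iff_integrableOn_abs_deriv_smul measurableSet_Ioi hder hmono.injOn
      (fun y : ℝ => Real.exp (-Real.pi * y ^ 2))).1 (by rw [himg]; exact hg.integrableOn)
    refine this.congr_fun (fun t ht => ?_) measurableSet_Ioi
    simp only [habs t ht, smul_eq_mul]
  have hI2 : ∫ t in Ioi 0, u' t * Real.exp (-Real.pi * (u t) ^ 2) = 1 := by
    have := integral_image_eq_integral_abs_deriv_smul measurableSet_Ioi hder hmono.injOn
      (fun y : ℝ => Real.exp (-Real.pi * y ^ 2))
    rw [himg, setIntegral_univ, hgi] at this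
    rw [this]
    refine setIntegral_congr_fun measurableSet_Ioi (fun t ht => ?_)
    simp only [habs t ht, smul_eq_mul]
  have hcont : ContinuousOn (fun t : ℝ => √t) (Ioi 0) := Real.continuous_sqrt.continuousOn
  have hne : ∀ t ∈ Ioi (0:ℝ), √t ≠ 0 := fun t ht => (Real.sqrt_pos.2 ht).ne'
  have hucont : ContinuousOn u (Ioi 0) := fun t ht => (hder t ht).continuousWithinAt
  have hA : IntegrableOn (fun t : ℝ => c / (t * √t) * Real.exp (-Real.pi * (u t) ^ 2)) (Ioi 0) := by
    refine Integrable.mono' (hI1.const_mul 2) ?_ ?_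
    · refine ContinuousOn.aestronglyMeasurable ?_ measurableSet_Ioi
      refine ContinuousOn.mul (continuousOn_const.div (continuousOn_id.mul hcont) ?_) ?_
      · intro t ht
        exact mul_ne_zero (ne_of_gt ht) (hne t ht)
      · exact Real.continuous_exp.comp_continuousOn (continuousOn_const.mul (hucont.pow 2))
    · refine (ae_restrict_mem measurableSet_Ioi).mono fun t ht => ?_
      have ht' : 0 < t := ht
      have hs : 0 < √t := Real.sqrt_pos.2 ht'
      rw [Real.norm_of_nonneg (by positivity), ← mul_assoc]
      gcongr
      simp only [hu']
      have h1 : 0 < x / (2 * √t) := by positivity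
      have h2 : 2 * (c / (2 * (t * √t))) = c / (t * √t) := by field_simp
      linarith
  have hB : IntegrableOn (fun t : ℝ => x / √t * Real.exp (-Real.pi * (u t) ^ 2)) (Ioi 0) := by
    have := (hI1.const_mul 2).sub hA
    refine IntegrableOn.congr_fun this (fun t ht => ?_) measurableSet_Ioi
    have ht' : 0 < t := ht
    have hs : 0 < √t := Real.sqrt_pos.2 ht'
    simp only [hu', Pi.sub_apply]
    field_simp
    ring
  have hsum : (∫ t in Ioi (0:ℝ), c / (t * √t) * Real.exp (-Real.pi * (u t) ^ 2)) +
      ∫ t in Ioi (0:ℝ), x / √t * Real.exp (-Real.pi * (u t) ^ 2) = 2 := by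
    rw [← integral_add hA hB]
    have : (2:ℝ) = 2 * ∫ t in Ioi 0, u' t * Real.exp (-Real.pi * (u t) ^ 2) := by rw [hI2]; norm_num
    rw [this, ← integral_const_mul]
    refine setIntegral_congr_fun measurableSet_Ioi (fun t ht => ?_)
    have ht' : 0 < t := ht
    have hs : 0 < √t := Real.sqrt_pos.2 ht'
    simp only [hu']
    field_simp
    ring
  have hrefl : (∫ t in Ioi (0:ℝ), c / (t * √t) * Real.exp (-Real.pi * (u t) ^ 2)) =
      ∫ t in Ioi (0:ℝ), x / √t * Real.exp (-Real.pi * (u t) ^ 2) := by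
    set k := (c / x) ^ 2 with hk
    have hk0 : 0 < k := by positivity
    have hr : ∀ t ∈ Ioi (0:ℝ), HasDerivWithinAt (fun t => k / t) (-(k / t ^ 2)) (Ioi 0) t := by
      intro t ht
      have ht' : t ≠ 0 := ne_of_gt ht
      have h2 := (hasDerivAt_const t k).div (hasDerivAt_id t) ht'
      refine (h2.congr_deriv ?_).hasDerivWithinAt
      simp
      ring
    have hinj : InjOn (fun t => k / t) (Ioi 0) := by
      intro s hs t ht h
      have hs' : s ≠ 0 := ne_of_gt hs
      have ht' : t ≠ 0 := ne_of_gt ht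
      simp only at h
      field_simp at h
      exact h.symm
    have him : (fun t => k / t) '' Ioi 0 = Ioi 0 := by
      ext y
      constructor
      · rintro ⟨t, ht, rfl⟩
        have ht' : 0 < t := ht
        simp only [mem_Ioi]; positivity
      · intro hy
        have hy' : 0 < y := hy
        refine ⟨k / y, by simp only [mem_Ioi]; positivity, by field_simp⟩
    have := integral_image_eq_integral_abs_deriv_smul measurableSet_Ioi hr hinj
      (fun t : ℝ => c / (t * √t) * Real.exp (-Real.pi * (u t) ^ 2))
    rw [him] at this
    rw [this]
    refine setIntegral_congr_fun measurableSet_Ioi (fun t ht => ?_)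
    have ht' : 0 < t := ht
    have hs : 0 < √t := Real.sqrt_pos.2 ht'
    have hsq : √t ^ 2 = t := Real.sq_sqrt ht'.le
    have hsk : √(k / t) = (c / x) / √t := by
      rw [Real.sqrt_div hk0.le, hk, Real.sqrt_sq (by positivity)]
    have hun : u (k / t) = - u t := by
      simp only [hu, hsk]
      field_simp
      ring
    simp only [hun, abs_neg, smul_eq_mul, neg_sq, hsk]
    rw [abs_of_pos (by positivity), ← mul_assoc]
    congr 1
    rw [hk]
    field_simp
    rw [hsq]
  exact ⟨hA, by linarith⟩

lemma levy (c x : ℝ) (hc : 0 < c) (hx : 0 < x) :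
    IntegrableOn (fun t : ℝ => c / (t * √t) * Real.exp (-Real.pi * c ^ 2 / t - Real.pi * x ^ 2 * t)) (Ioi 0) ∧
    ∫ t in Ioi (0:ℝ), c / (t * √t) * Real.exp (-Real.pi * c ^ 2 / t - Real.pi * x ^ 2 * t) =
      Real.exp (-2 * Real.pi * c * x) := by
  obtain ⟨h1, h2⟩ := levy_aux c x hc hx
  have key : ∀ t ∈ Ioi (0:ℝ), c / (t * √t) * Real.exp (-Real.pi * (x * √t - c / √t) ^ 2) *
      Real.exp (-2 * Real.pi * c * x) =
      c / (t * √t) * Real.exp (-Real.pi * c ^ 2 / t - Real.pi * x ^ 2 * t) := by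
    intro t ht
    have ht' : 0 < t := ht
    have hs : 0 < √t := Real.sqrt_pos.2 ht'
    have hsq : √t ^ 2 = t := Real.sq_sqrt ht'.le
    rw [mul_assoc, ← Real.exp_add]
    congr 2
    have e1 : (x * √t - c / √t) ^ 2 = x ^ 2 * √t ^ 2 + c ^ 2 / √t ^ 2 - 2 * x * c := by
      field_simp
      ring
    rw [e1, hsq]; ring
  constructor
  · exact IntegrableOn.congr_fun (h1.mul_const _) key measurableSet_Ioi
  · rw [← setIntegral_congr_fun measurableSet_Ioi key, integral_mul_const, h2, one_mul]

lemma hasSum_cg {ι : Type} {f g : ι → ℝ} {a b : ℝ} (h : HasSum f a) (e : ∀ i, g i = f i)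
    (e2 : b = a) : HasSum g b := by
  rw [e2, show g = f from funext e]; exact h

lemma sinKernel_eq (a t : ℝ) (ht : 0 < t) :
    HasSum (fun n : ℤ => (n + a) / (t * √t) * Real.exp (-Real.pi * (n + a) ^ 2 / t))
      (HurwitzZeta.sinKernel (a : UnitAddCircle) t) := by
  have h := HurwitzZeta.hasSum_int_oddKernel a (x := 1 / t) (by positivity)
  rw [HurwitzZeta.oddKernel_functional_equation, one_div_one_div] at h
  have h2 := h.mul_left (1 / (t * √t))
  have e : (1 / t) ^ (3 / 2 : ℝ) = 1 / (t * √t) := by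
    rw [one_div, Real.inv_rpow ht.le, one_div]
    congr 1
    rw [show (3 / 2 : ℝ) = 1 + 1 / 2 by norm_num, Real.rpow_add ht, Real.rpow_one, Real.sqrt_eq_rpow]
  have hs : 0 < √t := Real.sqrt_pos.2 ht
  rw [e] at h2
  refine hasSum_cg h2 (fun n => ?_) ?_
  · rw [show -Real.pi * ((n:ℝ) + a) ^ 2 * (1 / t) = -Real.pi * ((n:ℝ) + a) ^ 2 / t by ring]
    ring
  · field_simp

lemma sinKernel_integrable (a : ℝ) :
    IntegrableOn (fun t : ℝ => ((HurwitzZeta.sinKernel (a : UnitAddCircle) t : ℝ) : ℂ)) (Ioi 0) := by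
  have h := (HurwitzZeta.isStrong_hurwitzOddFEPair (a : UnitAddCircle)).symm.hasMellin 1
  have := h.1
  simpa [MellinConvergent, HurwitzZeta.hurwitzOddFEPair, WeakFEPair.symm] using this

lemma sinKernel_laplace (a x : ℝ) (ha : 0 < a) (ha1 : a < 1) (hx : 0 < x) :
    ∫ t in Ioi (0:ℝ), HurwitzZeta.sinKernel (a : UnitAddCircle) t * Real.exp (-Real.pi * x ^ 2 * t) =
      (Real.exp (-2 * Real.pi * a * x) - Real.exp (-2 * Real.pi * (1 - a) * x)) *
        (1 - Real.exp (-2 * Real.pi * x))⁻¹ := by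
  set F : ℤ → ℝ → ℝ := fun n t => (n + a) / (t * √t) *
    Real.exp (-Real.pi * (n + a) ^ 2 / t - Real.pi * x ^ 2 * t) with hF
  have hpos : ∀ n : ℕ, 0 < (((n:ℤ) : ℝ) + a) := fun n => by push_cast; positivity
  have hneg : ∀ n : ℕ, 0 < (n : ℝ) + 1 - a := fun n => by
    have : (0:ℝ) ≤ n := Nat.cast_nonneg n
    linarith
  have hFneg : ∀ n : ℕ, F (-((n:ℤ) + 1)) = fun t => - (((n : ℝ) + 1 - a) / (t * √t) *
    Real.exp (-Real.pi * ((n : ℝ) + 1 - a) ^ 2 / t - Real.pi * x ^ 2 * t)) := by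
    intro n; ext t
    simp only [hF]; push_cast
    rw [show (-((n:ℝ) + 1) + a) ^ 2 = ((n:ℝ) + 1 - a) ^ 2 by ring]
    ring
  have hint : ∀ n : ℤ, IntegrableOn (F n) (Ioi 0) := by
    intro n
    obtain ⟨m, rfl | rfl⟩ : ∃ m : ℕ, n = m ∨ n = -((m:ℤ) + 1) := by
      rcases n with m | m
      · exact ⟨m, Or.inl rfl⟩
      · exact ⟨m, Or.inr (by rw [Int.negSucc_eq])⟩
    · exact (levy _ x (hpos m) hx).1
    · rw [hFneg]; exact (levy _ x (hneg m) hx).1.neg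
  have hr0 : 0 ≤ Real.exp (-2 * Real.pi * x) := (Real.exp_pos _).le
  have hr1 : Real.exp (-2 * Real.pi * x) < 1 := by
    rw [Real.exp_lt_one_iff]
    have := mul_pos Real.pi_pos hx
    nlinarith
  have hgeo := hasSum_geometric_of_lt_one hr0 hr1
  have hg1 : HasSum (fun n : ℕ => Real.exp (-2 * Real.pi * (((n:ℤ):ℝ) + a) * x))
      (Real.exp (-2 * Real.pi * a * x) * (1 - Real.exp (-2 * Real.pi * x))⁻¹) := by
    refine hasSum_cg (hgeo.mul_left (Real.exp (-2 * Real.pi * a * x))) (fun n => ?_) rfl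
    rw [← Real.exp_nat_mul, ← Real.exp_add]
    congr 1; push_cast; ring
  have hg2 : HasSum (fun n : ℕ => Real.exp (-2 * Real.pi * ((n:ℝ) + 1 - a) * x))
      (Real.exp (-2 * Real.pi * (1 - a) * x) * (1 - Real.exp (-2 * Real.pi * x))⁻¹) := by
    refine hasSum_cg (hgeo.mul_left (Real.exp (-2 * Real.pi * (1 - a) * x))) (fun n => ?_) rfl
    rw [← Real.exp_nat_mul, ← Real.exp_add]
    congr 1; push_cast; ring
  have hn1 : ∀ n : ℕ, ∫ t in Ioi (0:ℝ), ‖F n t‖ = Real.exp (-2 * Real.pi * (((n:ℤ):ℝ) + a) * x) := by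
    intro n
    rw [← (levy _ x (hpos n) hx).2]
    refine setIntegral_congr_fun measurableSet_Ioi (fun t ht => ?_)
    have ht' : 0 < t := ht
    have := hpos n
    exact Real.norm_of_nonneg (by positivity)
  have hn2 : ∀ n : ℕ, ∫ t in Ioi (0:ℝ), ‖F (-((n:ℤ) + 1)) t‖ =
      Real.exp (-2 * Real.pi * ((n:ℝ) + 1 - a) * x) := by
    intro n
    rw [← (levy _ x (hneg n) hx).2, hFneg]
    refine setIntegral_congr_fun measurableSet_Ioi (fun t ht => ?_)
    have ht' : 0 < t := ht
    have := hneg n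
    simp only [norm_neg]
    exact Real.norm_of_nonneg (by positivity)
  have hsm : Summable fun n : ℤ => ∫ t in Ioi (0:ℝ), ‖F n t‖ := by
    refine Summable.of_nat_of_neg_add_one ?_ ?_
    · simp_rw [hn1]; exact hg1.summable
    · simp_rw [hn2]; exact hg2.summable
  have key := hasSum_integral_of_summable_integral_norm hint hsm
  have key2 : HasSum (fun n : ℤ => ∫ t in Ioi (0:ℝ), F n t)
      (Real.exp (-2 * Real.pi * a * x) * (1 - Real.exp (-2 * Real.pi * x))⁻¹ +
       -(Real.exp (-2 * Real.pi * (1 - a) * x) * (1 - Real.exp (-2 * Real.pi * x))⁻¹)) := by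
    refine HasSum.of_nat_of_neg_add_one ?_ ?_
    · refine hasSum_cg hg1 (fun n => ?_) rfl
      exact (levy _ x (hpos n) hx).2
    · refine hasSum_cg hg2.neg (fun n => ?_) rfl
      rw [hFneg, integral_neg, (levy _ x (hneg n) hx).2]
  have e := key.unique key2
  rw [sub_mul, sub_eq_add_neg, ← e]
  refine setIntegral_congr_fun measurableSet_Ioi (fun t ht => ?_)
  have h := (sinKernel_eq a t ht).mul_right (Real.exp (-Real.pi * x ^ 2 * t))
  rw [← h.tsum_eq]
  refine tsum_congr fun n => ?_
  simp only [hF]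
  rw [mul_assoc, ← Real.exp_add]
  congr 2; ring

lemma sinKernel_laplace' (b x : ℝ) (hb₁ : -(1/2) < b) (hb₂ : b < 1/2) (hx : x ≠ 0) :
    ∫ t in Ioi (0:ℝ), HurwitzZeta.sinKernel ((b + 1/2 : ℝ) : UnitAddCircle) t *
        Real.exp (-Real.pi * x ^ 2 * t) =
      - (Real.sinh (2 * Real.pi * b * x) / Real.sinh (Real.pi * x)) := by
  have main : ∀ x : ℝ, 0 < x → ∫ t in Ioi (0:ℝ), HurwitzZeta.sinKernel ((b + 1/2 : ℝ) : UnitAddCircle) t *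
        Real.exp (-Real.pi * x ^ 2 * t) =
      - (Real.sinh (2 * Real.pi * b * x) / Real.sinh (Real.pi * x)) := by
    intro x hx
    rw [sinKernel_laplace (b + 1/2) x (by linarith) (by linarith) hx]
    rw [Real.sinh_eq, Real.sinh_eq]
    have hpx : 0 < Real.pi * x := mul_pos Real.pi_pos hx
    have e1 : Real.exp (-2 * Real.pi * (b + 1/2) * x) =
      Real.exp (-(Real.pi * x)) * Real.exp (-(2 * Real.pi * b * x)) := by
      rw [← Real.exp_add]; congr 1; ring
    have e2 : Real.exp (-2 * Real.pi * (1 - (b + 1/2)) * x) =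
      Real.exp (-(Real.pi * x)) * Real.exp (2 * Real.pi * b * x) := by
      rw [← Real.exp_add]; congr 1; ring
    have e3 : 1 - Real.exp (-2 * Real.pi * x) =
      Real.exp (-(Real.pi * x)) * (Real.exp (Real.pi * x) - Real.exp (-(Real.pi * x))) := by
      rw [mul_sub, ← Real.exp_add, ← Real.exp_add]
      rw [show -(Real.pi * x) + Real.pi * x = 0 by ring, Real.exp_zero]
      congr 2; ring
    have hne : Real.exp (Real.pi * x) - Real.exp (-(Real.pi * x)) ≠ 0 := by
      have : Real.exp (-(Real.pi * x)) < Real.exp (Real.pi * x) := Real.exp_lt_exp.2 (by linarith)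
      linarith
    have hne2 := (Real.exp_pos (-(Real.pi * x))).ne'
    rw [e1, e2, e3]
    generalize Real.exp (-(Real.pi * x)) = A at *
    generalize Real.exp ((Real.pi * x)) = B at *
    field_simp
    ring
  rcases lt_or_gt_of_ne hx with h | h
  · have := main (-x) (by linarith)
    rw [neg_sq] at this
    rw [this, mul_neg, mul_neg, Real.sinh_neg, Real.sinh_neg, neg_div_neg_eq]
  · exact main x h

lemma gUnary_eq (b t : ℝ) (ht : 0 < t) :
    gUnary 1 (b + 1/2) (I * t) = I * (HurwitzZeta.sinKernel ((b + 1/2 : ℝ) : UnitAddCircle) t : ℝ) := by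
  have h := (HurwitzZeta.hasSum_int_sinKernel (b + 1/2) ht).mul_left I
  rw [← (Equiv.addRight (1:ℤ)).hasSum_iff] at h
  rw [← h.tsum_eq, gUnary]
  refine tsum_congr fun n => ?_
  simp only [Function.comp_apply, Equiv.coe_addRight]
  have e : (Complex.exp ((Real.pi : ℂ) * I * (I * t) * ((n : ℂ) + (1:ℝ)) ^ 2)) =
    ((Real.exp (-Real.pi * ((n + 1 : ℤ) : ℝ) ^ 2 * t) : ℝ) : ℂ) := by
    push_cast
    congr 1
    linear_combination (Real.pi * t * ((n:ℂ) + 1) ^ 2) * I_sq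
  rw [e]
  push_cast
  linear_combination (((n:ℂ) + 1) * cexp (2 * ↑Real.pi * I * (↑b + 1 / 2) * (↑n + 1)) *
    cexp (-↑Real.pi * (↑n + 1) ^ 2 * ↑t)) * I_sq

lemma inv_sqrt_eq (z : ℂ) (hz : 0 < z.re) :
    ∫ x : ℝ, cexp (-(Real.pi * z) * (x:ℂ) ^ 2) = 1 / z ^ ((1:ℂ)/2) := by
  have hpi : (Real.pi : ℂ) ≠ 0 := by exact_mod_cast Real.pi_ne_zero
  have hz0 : z ≠ 0 := by rintro rfl; simp at hz
  rw [integral_gaussian_complex (by simp; positivity)]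
  rw [show (Real.pi : ℂ) / (Real.pi * z) = z⁻¹ by field_simp, inv_cpow, one_div, one_div]
  intro h
  rw [arg_eq_pi_iff] at h
  linarith [h.1]

lemma lhs_eq (τ : ℂ) (hτ : 0 < τ.im) (b : ℝ) (hb₁ : -(1/2) < b) (hb₂ : b < 1/2) :
    IntegrableOn
      (fun t : ℝ => gUnary 1 (b + 1/2) (I * t) / ((-I * (I * t + τ)) ^ ((1 : ℂ)/2)))
      (Set.Ioi 0) ∧
    I * ∫ t in Set.Ioi (0 : ℝ),
        gUnary 1 (b + 1/2) (I * t) / ((-I * (I * t + τ)) ^ ((1 : ℂ)/2)) =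
      ∫ x : ℝ, cexp (Real.pi * I * τ * (x:ℂ) ^ 2) *
        (Complex.sinh (2 * Real.pi * b * x) / Complex.sinh (Real.pi * x)) := by
  set K : ℝ → ℂ := fun t => ((HurwitzZeta.sinKernel ((b + 1/2 : ℝ) : UnitAddCircle) t : ℝ) : ℂ) with hK
  have hKint : IntegrableOn K (Ioi 0) := sinKernel_integrable _
  have hG : Integrable (fun x : ℝ => cexp (Real.pi * I * τ * (x:ℂ) ^ 2)) := by
    have := integrable_cexp_neg_mul_sq (b := -(Real.pi * I * τ)) (by simp; positivity)
    simpa using this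
  set H : ℝ × ℝ → ℂ := fun p => K p.1 * cexp (Real.pi * I * τ * (p.2:ℂ) ^ 2) *
    cexp (-(Real.pi * p.1 * (p.2:ℂ) ^ 2)) with hH
  have hHint : Integrable H ((volume.restrict (Ioi 0)).prod volume) := by
    have h0 := hKint.integrable.mul_prod hG
    refine h0.mono (h0.1.mul (by fun_prop)) ?_
    have : ∀ᵐ p : ℝ × ℝ ∂((volume.restrict (Ioi 0)).prod volume), p.1 ∈ Ioi (0:ℝ) :=
      Measure.quasiMeasurePreserving_fst.ae (ae_restrict_mem measurableSet_Ioi)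
    refine this.mono fun p hp => ?_
    have hp' : 0 < p.1 := hp
    simp only [hH]
    rw [norm_mul]
    refine mul_le_of_le_one_right (norm_nonneg _) ?_
    rw [Complex.norm_exp, Real.exp_le_one_iff]
    rw [show -((Real.pi : ℂ) * p.1 * (p.2:ℂ) ^ 2) = ((-(Real.pi * p.1 * p.2 ^ 2) : ℝ) : ℂ) by push_cast; ring,
      ofReal_re]
    have := Real.pi_pos
    have : 0 ≤ Real.pi * p.1 * p.2 ^ 2 := by positivity
    linarith
  have hinner : ∀ t ∈ Ioi (0:ℝ), I * ∫ x : ℝ, H (t, x) =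
      gUnary 1 (b + 1/2) (I * t) / ((-I * (I * t + τ)) ^ ((1 : ℂ)/2)) := by
    intro t ht
    have ht' : 0 < t := ht
    rw [gUnary_eq b t ht]
    have hz : 0 < (-I * (I * t + τ)).re := by
      simp; linarith
    rw [div_eq_mul_one_div, ← inv_sqrt_eq _ hz, mul_assoc]
    congr 1
    rw [← integral_const_mul]
    refine integral_congr_ae (Filter.Eventually.of_forall fun x => ?_)
    simp only [hH, hK]
    rw [mul_assoc, ← Complex.exp_add]
    congr 2
    linear_combination (-(Real.pi * t * (x:ℂ) ^ 2)) * I_sq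
  have h1 : IntegrableOn (fun t => I * ∫ x : ℝ, H (t, x)) (Ioi 0) := hHint.integral_prod_left.const_mul I
  refine ⟨h1.congr_fun hinner measurableSet_Ioi, ?_⟩
  rw [← setIntegral_congr_fun measurableSet_Ioi hinner, integral_const_mul, ← mul_assoc, I_mul_I]
  have hswap : ∫ t in Ioi (0:ℝ), ∫ x : ℝ, H (t, x) = ∫ x : ℝ, ∫ t in Ioi (0:ℝ), H (t, x) :=
    integral_integral_swap (f := fun t x => H (t, x)) hHint
  rw [hswap, ← integral_const_mul]
  have hae : ∀ᵐ x : ℝ, x ≠ 0 := by simp [ae_iff]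
  refine integral_congr_ae (hae.mono fun x hx => ?_)
  have hl := sinKernel_laplace' b x hb₁ hb₂ hx
  have hl' := integral_complex_ofReal (μ := volume.restrict (Ioi (0:ℝ)))
    (f := fun t => HurwitzZeta.sinKernel ((b + 1/2 : ℝ) : UnitAddCircle) t *
        Real.exp (-Real.pi * x ^ 2 * t))
  rw [hl] at hl'
  push_cast at hl'
  have : ∫ t in Ioi (0:ℝ), H (t, x) = cexp (Real.pi * I * τ * (x:ℂ) ^ 2) *
      -(Complex.sinh (2 * Real.pi * b * x) / Complex.sinh (Real.pi * x)) := by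
    rw [← hl', ← integral_const_mul]
    refine integral_congr_ae (Filter.Eventually.of_forall fun t => ?_)
    simp only [hH, hK]
    rw [show -((Real.pi : ℂ) * t * (x:ℂ) ^ 2) = -Real.pi * (x:ℂ) ^ 2 * t by ring]
    push_cast
    ring
  beta_reduce
  rw [this]
  ring

lemma integrable_of_bound (f : ℝ → ℂ) (hf : Continuous f) (C : ℝ)
    (h : ∀ x, ‖f x‖ ≤ C / (1 + x ^ 2)) : Integrable f := by
  refine Integrable.mono' (integrable_inv_one_add_sq.const_mul C) hf.aestronglyMeasurable
    (Filter.Eventually.of_forall fun x => ?_)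
  exact (h x).trans (le_of_eq (div_eq_mul_inv _ _))

lemma shift_line (D : ℂ → ℂ) (hd : DifferentiableOn ℂ D {w : ℂ | |w.im| < 1}) (C : ℝ)
    (hC : ∀ x y : ℝ, 0 ≤ y → y ≤ 1/2 → ‖D (x + y * I)‖ ≤ C / (1 + x ^ 2)) :
    Integrable (fun x : ℝ => D x) ∧ Integrable (fun x : ℝ => D (x + (1/2 : ℝ) * I)) ∧
    ∫ x : ℝ, D x = ∫ x : ℝ, D (x + (1/2 : ℝ) * I) := by
  have hcl : ∀ y : ℝ, |y| < 1 → Continuous (fun x : ℝ => D (x + y * I)) := by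
    intro y hy
    refine hd.continuousOn.comp_continuous (by fun_prop) (fun x => ?_)
    simpa using hy
  have h0 : Integrable (fun x : ℝ => D (x + (0:ℝ) * I)) :=
    integrable_of_bound _ (hcl 0 (by simp)) C (fun x => hC x 0 le_rfl (by norm_num))
  have h1 : Integrable (fun x : ℝ => D (x + (1/2 : ℝ) * I)) :=
    integrable_of_bound _ (hcl (1/2) (by rw [abs_of_pos] <;> norm_num)) C
      (fun x => hC x (1/2) (by norm_num) le_rfl)
  have hz : (fun x : ℝ => D (x + (0:ℝ) * I)) = fun x : ℝ => D x := by ext x; simp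
  have hrect : ∀ R : ℝ, (∫ x : ℝ in (-R)..R, D (x + (0:ℝ) * I)) -
      (∫ x : ℝ in (-R)..R, D (x + (1/2 : ℝ) * I)) +
      I • (∫ y : ℝ in (0:ℝ)..(1/2), D ((R:ℝ) + y * I)) -
      I • (∫ y : ℝ in (0:ℝ)..(1/2), D (((-R : ℝ) : ℂ) + y * I)) = 0 := by
    intro R
    have := integral_boundary_rect_eq_zero_of_differentiableOn D ⟨-R, 0⟩ ⟨R, 1/2⟩ (hd.mono ?_)
    · exact this
    · intro w hw
      have h2 := hw.2
      simp only [mem_preimage] at h2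
      rw [uIcc_of_le (by norm_num)] at h2
      simp only [mem_ofPred_eq]
      rw [abs_of_nonneg h2.1]
      linarith [h2.2]
  have hvert : ∀ s : ℝ → ℝ, (∀ R, s R ^ 2 = R ^ 2) → Filter.Tendsto
      (fun R : ℝ => ∫ y : ℝ in (0:ℝ)..(1/2), D ((s R : ℝ) + y * I)) Filter.atTop (nhds 0) := by
    intro s hs
    have hlim : Filter.Tendsto (fun R : ℝ => C / (1 + R ^ 2) * |1/2 - 0|) Filter.atTop (nhds 0) := by
      have : Filter.Tendsto (fun R : ℝ => 1 + R ^ 2) Filter.atTop Filter.atTop :=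
        Filter.tendsto_atTop_add_const_left _ _ (Filter.tendsto_pow_atTop (by norm_num))
      simpa using (this.const_div_atTop C).mul_const |(1/2 : ℝ) - 0|
    refine squeeze_zero_norm (fun R => ?_) hlim
    refine intervalIntegral.norm_integral_le_of_norm_le_const fun y hy => ?_
    rw [uIoc_of_le (by norm_num)] at hy
    have := hC (s R) y hy.1.le hy.2
    rwa [hs] at this
  have hA := intervalIntegral_tendsto_integral h0 Filter.tendsto_neg_atTop_atBot Filter.tendsto_id
  have hB := intervalIntegral_tendsto_integral h1 Filter.tendsto_neg_atTop_atBot Filter.tendsto_id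
  have hV1 := (hvert (fun R => R) (fun R => rfl)).const_smul I
  have hV2 := (hvert (fun R => -R) (fun R => by ring)).const_smul I
  have hT := ((hA.sub hB).add hV1).sub hV2
  have hT0 := hT.congr (fun R => hrect R)
  have := tendsto_nhds_unique hT0 tendsto_const_nhds
  rw [hz] at this h0
  refine ⟨h0, h1, ?_⟩
  simp only [smul_zero, add_zero, sub_zero] at this
  exact sub_eq_zero.1 this

lemma gauss_bound (A B E : ℝ) (hA : 0 < A) :
    ∃ C : ℝ, 0 ≤ C ∧ ∀ x : ℝ, Real.exp (-A * x ^ 2 + B * |x| + E) ≤ C / (1 + x ^ 2) := by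
  refine ⟨Real.exp (E + B ^ 2 / (2 * A)) * (1 + 2 / A), by positivity, fun x => ?_⟩
  rw [le_div_iff₀ (by positivity)]
  have h1 : -A * x ^ 2 + B * |x| + E ≤ (E + B ^ 2 / (2 * A)) + -(A / 2 * x ^ 2) := by
    have : 0 ≤ (A * |x| - B) ^ 2 / (2 * A) := by positivity
    have e : (A * |x| - B) ^ 2 / (2 * A) = A / 2 * |x| ^ 2 - B * |x| + B ^ 2 / (2 * A) := by
      field_simp; ring
    rw [e, sq_abs] at this
    linarith
  have h2 : 1 + x ^ 2 ≤ (1 + 2 / A) * Real.exp (A / 2 * x ^ 2) := by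
    have := Real.add_one_le_exp (A / 2 * x ^ 2)
    have h3 : (1 + 2 / A) * (A / 2 * x ^ 2 + 1) ≤ (1 + 2 / A) * Real.exp (A / 2 * x ^ 2) := by gcongr
    have e : (1 + 2 / A) * (A / 2 * x ^ 2 + 1) = 1 + x ^ 2 + (A / 2 * x ^ 2 + 2 / A) := by
      field_simp; ring
    have : 0 ≤ A / 2 * x ^ 2 + 2 / A := by positivity
    linarith
  calc Real.exp (-A * x ^ 2 + B * |x| + E) * (1 + x ^ 2)
      ≤ Real.exp ((E + B ^ 2 / (2 * A)) + -(A / 2 * x ^ 2)) *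
        ((1 + 2 / A) * Real.exp (A / 2 * x ^ 2)) := by gcongr
    _ = Real.exp (E + B ^ 2 / (2 * A)) * (1 + 2 / A) := by
      rw [Real.exp_add, Real.exp_neg]
      field_simp

lemma P_integral : Integrable (fun x : ℝ => 1 / (((x:ℂ) + (1/2 : ℝ) * I) * (1 + ((x:ℂ) + (1/2 : ℝ) * I) ^ 2))) ∧
    ∫ x : ℝ, 1 / (((x:ℂ) + (1/2 : ℝ) * I) * (1 + ((x:ℂ) + (1/2 : ℝ) * I) ^ 2)) = -(Real.pi * I) := by
  set w : ℝ → ℂ := fun x => (x:ℂ) + (1/2 : ℝ) * I with hw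
  have hre : ∀ x, (w x).re = x := fun x => by simp [hw]
  have him : ∀ x, (w x).im = 1/2 := fun x => by simp [hw]
  have hsre : ∀ x, (1 + (w x) ^ 2).re = 3/4 + x ^ 2 := fun x => by
    simp [sq, hre, him]; ring
  have hw0 : ∀ x, w x ≠ 0 := fun x h => by have := him x; rw [h] at this; norm_num at this
  have hs0 : ∀ x, 1 + (w x) ^ 2 ≠ 0 := fun x h => by
    have := hsre x; rw [h] at this; simp at this; nlinarith [sq_nonneg x]
  have hwc : Continuous w := by simp only [hw]; fun_prop
  have hint : Integrable (fun x : ℝ => 1 / (w x * (1 + (w x) ^ 2))) := by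
    refine integrable_of_bound _ ?_ (4) (fun x => ?_)
    · exact continuous_const.div (by fun_prop) (fun x => mul_ne_zero (hw0 x) (hs0 x))
    · rw [norm_div, norm_mul, norm_one]
      have h1 : 1/2 ≤ ‖w x‖ := by
        have := Complex.abs_im_le_norm (w x); rw [him, abs_of_pos] at this <;> linarith
      have h2 : 3/4 + x ^ 2 ≤ ‖1 + w x ^ 2‖ := by
        have := Complex.re_le_norm (1 + w x ^ 2); rwa [hsre] at this
      rw [div_le_div_iff₀ (mul_pos (norm_pos_iff.2 (hw0 x)) (norm_pos_iff.2 (hs0 x))) (by positivity)]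
      have : 1/2 * (3/4 + x ^ 2) ≤ ‖w x‖ * ‖1 + w x ^ 2‖ := by gcongr
      nlinarith [sq_nonneg x]
  refine ⟨hint, ?_⟩
  set A : ℝ → ℂ := fun x => Complex.log (-I * w x) - 1/2 * Complex.log (1 + w x ^ 2) with hA
  have hder : ∀ x, HasDerivAt A (1 / (w x * (1 + (w x) ^ 2))) x := by
    intro x
    have hdw : HasDerivAt w 1 x := (Complex.ofRealCLM.hasDerivAt (x := x)).add_const _
    have h1 : HasDerivAt (fun x => Complex.log (-I * w x)) (-I * 1 / (-I * w x)) x :=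
      (hdw.const_mul (-I)).clog_real (by left; simp [him])
    have h2 : HasDerivAt (fun x => Complex.log (1 + w x ^ 2)) ((2 * w x ^ 1 * 1) / (1 + w x ^ 2)) x :=
      ((hdw.pow 2).const_add 1).clog_real (by left; have := hsre x; simp only [Pi.pow_apply]; rw [this]; positivity)
    refine (h1.sub (h2.const_mul (1/2))).congr_deriv ?_
    have := hw0 x
    have := hs0 x
    have := I_ne_zero
    field_simp
    ring
  have hrep : ∀ x : ℝ, x ≠ 0 → ∀ s : ℝ, s = |x| / x → A x = Complex.log (-I * (s + (1/2 : ℝ) * I * ((|x|⁻¹ : ℝ) : ℂ))) -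
      1/2 * Complex.log (1 + s * I * ((|x|⁻¹ : ℝ) : ℂ) + 3/4 * ((|x|⁻¹ : ℝ) : ℂ) ^ 2) := by
    intro x hx s hs
    have hax : 0 < |x| := abs_pos.2 hx
    have hsx : x = |x| * s := by
      rw [hs, ← mul_div_assoc, abs_mul_abs_self]; field_simp
    have hs2 : s ^ 2 = 1 := by rw [hs, div_pow, sq_abs, div_self (by positivity)]
    have hsc : (s : ℂ) ^ 2 = 1 := by exact_mod_cast hs2
    have hxc : ((|x| : ℝ) : ℂ) ≠ 0 := by exact_mod_cast hax.ne'
    have hxs : (x : ℂ) = (|x| : ℝ) * s := by exact_mod_cast hsx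
    have e1 : -I * w x = ((|x| : ℝ) : ℂ) * (-I * (s + (1/2 : ℝ) * I * ((|x|⁻¹ : ℝ) : ℂ))) := by
      simp only [hw]; rw [hxs]; push_cast; field_simp
    have e2 : 1 + w x ^ 2 = ((|x| ^ 2 : ℝ) : ℂ) * (1 + s * I * ((|x|⁻¹ : ℝ) : ℂ) + 3/4 * ((|x|⁻¹ : ℝ) : ℂ) ^ 2) := by
      simp only [hw]; rw [hxs]; push_cast; field_simp
      ring_nf
      rw [I_sq, hsc]; ring
    simp only [hA]
    have n1 : -I * w x ≠ 0 := mul_ne_zero (neg_ne_zero.2 I_ne_zero) (hw0 x)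
    have n2 := hs0 x
    rw [e1] at n1
    rw [e2] at n2
    rw [e1, e2, Complex.log_ofReal_mul hax (right_ne_zero_of_mul n1),
      Complex.log_ofReal_mul (by positivity) (right_ne_zero_of_mul n2), Real.log_pow]
    push_cast
    ring
  have hlim : ∀ s : ℝ, s = 1 ∨ s = -1 → Filter.Tendsto (fun r : ℝ =>
      Complex.log (-I * (s + (1/2 : ℝ) * I * (r : ℂ))) -
      1/2 * Complex.log (1 + s * I * (r : ℂ) + 3/4 * (r : ℂ) ^ 2)) (nhds 0) (nhds (Complex.log (-I * s))) := by
    intro s hs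
    have c1 : ContinuousAt (fun r : ℝ => Complex.log (-I * (s + (1/2 : ℝ) * I * (r : ℂ)))) 0 := by
      refine ContinuousAt.clog (by fun_prop) ?_
      right
      rcases hs with rfl | rfl <;> simp
    have c2 : ContinuousAt (fun r : ℝ => Complex.log (1 + s * I * (r : ℂ) + 3/4 * (r : ℂ) ^ 2)) 0 := by
      refine ContinuousAt.clog (by fun_prop) ?_
      left
      simp
    have := (c1.sub (c2.const_mul (1/2))).tendsto
    simp only [ofReal_zero, mul_zero, add_zero, zero_pow two_ne_zero, Complex.log_one, sub_zero, Pi.sub_apply] at this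
    exact this
  have htop : Filter.Tendsto A Filter.atTop (nhds (Complex.log (-I * (1:ℝ)))) := by
    have h := (hlim 1 (Or.inl rfl)).comp
      (tendsto_inv_atTop_zero.comp (Filter.tendsto_abs_atTop_atTop (G := ℝ)))
    refine h.congr' ?_
    filter_upwards [Filter.eventually_gt_atTop 0] with x hx
    exact (hrep x hx.ne' 1 (by rw [abs_of_pos hx, div_self hx.ne'])).symm
  have hbot : Filter.Tendsto A Filter.atBot (nhds (Complex.log (-I * (-1:ℝ)))) := by
    have h := (hlim (-1) (Or.inr rfl)).comp
      (tendsto_inv_atTop_zero.comp (Filter.tendsto_abs_atBot_atTop (G := ℝ)))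
    refine h.congr' ?_
    filter_upwards [Filter.eventually_lt_atBot 0] with x hx
    exact (hrep x hx.ne (-1) (by rw [abs_of_neg hx, neg_div, div_self hx.ne])).symm
  have := integral_of_hasDerivAt_of_tendsto hder hint hbot htop
  rw [this]
  have l1 : Complex.log (-I * (1:ℝ)) = -(Real.pi / 2) * I := by simp [Complex.log_neg_I]
  have l2 : Complex.log (-I * (-1:ℝ)) = (Real.pi / 2) * I := by simp [Complex.log_I]
  rw [l1, l2]
  ring

lemma sinh_pi_ne (w : ℂ) (hw : |w.im| < 1) (h0 : w ≠ 0) : Complex.sinh (Real.pi * w) ≠ 0 := by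
  intro h
  have h1 : Complex.sin (Real.pi * w * I) = 0 := by rw [Complex.sin_mul_I, h, zero_mul]
  rw [Complex.sin_eq_zero_iff] at h1
  obtain ⟨k, hk⟩ := h1
  have hpi : (Real.pi : ℂ) ≠ 0 := by exact_mod_cast Real.pi_ne_zero
  have h2 : w * I = k := mul_left_cancel₀ hpi (by linear_combination hk)
  have h3 : w = -(k * I) := by linear_combination (-I) * h2 + w * I_sq
  have h4 : w.im = -(k:ℝ) := by rw [h3]; simp
  rw [h4, abs_neg] at hw
  have h5 : |k| < 1 := by exact_mod_cast hw
  rw [Int.abs_lt_one_iff] at h5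
  rw [h5] at h3
  simp at h3
  exact h0 h3

lemma norm_sinh_ge (w : ℂ) (hw : 1 ≤ |w.re|) : 1 ≤ ‖Complex.sinh (Real.pi * w)‖ := by
  have h1 : |Real.sinh (Real.pi * w.re)| ≤ ‖Complex.sinh (Real.pi * w)‖ := by
    have h := abs_norm_sub_norm_le (Complex.exp (Real.pi * w)) (Complex.exp (-(Real.pi * w)))
    rw [Complex.norm_exp, Complex.norm_exp] at h
    rw [Complex.sinh, norm_div, Real.sinh_eq, abs_div]
    simp only [neg_re, re_ofReal_mul] at h
    simp only [abs_two, Complex.norm_ofNat]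
    gcongr
  refine le_trans ?_ h1
  rw [Real.abs_sinh]
  have h2 : 1 ≤ |Real.pi * w.re| := by
    rw [abs_mul, abs_of_pos Real.pi_pos]
    nlinarith [Real.pi_gt_three]
  exact h2.trans (Real.self_le_sinh_iff.2 (abs_nonneg _))

lemma exp_bound (τ : ℂ) (hτ : 0 < τ.im) (b : ℝ) (hb₁ : -(1/2) < b) (hb₂ : b < 1/2) (x y : ℝ)
    (hy : 0 ≤ y) (hy2 : y ≤ 1/2) :
    ‖cexp (Real.pi * I * τ * ((x:ℂ) + y * I) ^ 2 + 2 * Real.pi * b * ((x:ℂ) + y * I))‖ ≤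
      Real.exp (-(Real.pi * τ.im) * x ^ 2 + (Real.pi * (|τ.re| + 1)) * |x| + Real.pi * τ.im) := by
  rw [Complex.norm_exp]
  apply Real.exp_le_exp.2
  have e : (Real.pi * I * τ * ((x:ℂ) + y * I) ^ 2 + 2 * Real.pi * b * ((x:ℂ) + y * I)).re =
      Real.pi * (-(τ.im * x ^ 2) + τ.im * y ^ 2 - 2 * (τ.re * x * y) + 2 * b * x) := by
    simp [sq]; ring
  rw [e]
  have h1 : -(2 * (τ.re * x * y)) ≤ |τ.re| * |x| := by
    have h := neg_abs_le (τ.re * x * y)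
    rw [abs_mul, abs_mul, abs_of_nonneg hy] at h
    have : |τ.re| * |x| * y ≤ |τ.re| * |x| * (1/2) := by gcongr
    linarith
  have h2 : 2 * b * x ≤ |x| := by
    have h := le_abs_self (b * x)
    rw [abs_mul] at h
    have : |b| ≤ 1/2 := abs_le.2 ⟨by linarith, by linarith⟩
    have : |b| * |x| ≤ 1/2 * |x| := by gcongr
    linarith
  have h3 : τ.im * y ^ 2 ≤ τ.im := mul_le_of_le_one_right hτ.le (pow_le_one₀ hy (by linarith))
  calc _ ≤ Real.pi * (-(τ.im * x ^ 2) + τ.im + |τ.re| * |x| + |x|) := by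
        gcongr
        linarith
    _ = _ := by ring

lemma rhs_eq (τ : ℂ) (hτ : 0 < τ.im) (b : ℝ) (hb₁ : -(1/2) < b) (hb₂ : b < 1/2) :
    Complex.exp (2 * (Real.pi : ℂ) * I * (-τ/8 + (b : ℂ)/2)) * mordellH (τ/2 - (b : ℂ)) τ =
      I * (∫ x : ℝ, cexp (Real.pi * I * τ * (x:ℂ) ^ 2) *
        (Complex.sinh (2 * Real.pi * b * x) / Complex.sinh (Real.pi * x))) + 1 := by
  have hpi : (Real.pi : ℂ) ≠ 0 := by exact_mod_cast Real.pi_ne_zero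
  set U : Set ℂ := {w : ℂ | |w.im| < 1} with hU
  have hUo : IsOpen U := isOpen_lt (by fun_prop) continuous_const
  have hU0 : U ∈ nhds (0:ℂ) := hUo.mem_nhds (by simp [hU])
  set S : ℂ → ℂ := dslope (fun w => Complex.sinh (Real.pi * w)) 0 with hS
  have hS1 : ∀ w, w ≠ 0 → S w = Complex.sinh (Real.pi * w) / w := by
    intro w hw
    rw [hS, dslope_of_ne _ hw, slope]
    simp [div_eq_inv_mul]
  have hS0 : S 0 = Real.pi := by
    rw [hS, dslope_same]
    have : HasDerivAt (fun w : ℂ => Complex.sinh (Real.pi * w)) (Complex.cosh (Real.pi * 0) * (Real.pi * 1)) 0 :=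
      ((hasDerivAt_id (0:ℂ)).const_mul (Real.pi : ℂ)).csinh
    rw [this.deriv]; simp
  have hSne : ∀ w ∈ U, S w ≠ 0 := by
    intro w hw
    by_cases h0 : w = 0
    · rw [h0, hS0]; exact hpi
    · rw [hS1 w h0]
      exact div_ne_zero (sinh_pi_ne w hw h0) h0
  have hSd : DifferentiableOn ℂ S U := by
    rw [hS, Complex.differentiableOn_dslope hU0]
    fun_prop
  have hne : ∀ w ∈ U, 1 + w ^ 2 ≠ 0 := by
    intro w hw h
    have h1 : (w - I) * (w + I) = 0 := by linear_combination h - I_sq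
    have hw' : |w.im| < 1 := hw
    rcases mul_eq_zero.1 h1 with h | h
    · rw [sub_eq_zero.1 h] at hw'; simp at hw'
    · rw [eq_neg_of_add_eq_zero_left h] at hw'; simp at hw'
  set q : ℂ → ℂ := fun w => I * cexp (Real.pi * I * τ * w ^ 2 + 2 * Real.pi * b * w) / S w -
    I / Real.pi / (1 + w ^ 2) with hq
  have hq0 : q 0 = 0 := by simp [hq, hS0]
  have hqd : DifferentiableOn ℂ q U := by
    refine DifferentiableOn.sub (DifferentiableOn.div (by fun_prop) hSd hSne)
      (DifferentiableOn.div (by fun_prop) (by fun_prop) hne)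
  set D : ℂ → ℂ := dslope q 0 with hD
  have hDd : DifferentiableOn ℂ D U := by
    rw [hD, Complex.differentiableOn_dslope hU0]; exact hqd
  have hD1 : ∀ w, w ≠ 0 → D w = I * cexp (Real.pi * I * τ * w ^ 2 + 2 * Real.pi * b * w) /
      Complex.sinh (Real.pi * w) - I / Real.pi * (1 / (w * (1 + w ^ 2))) := by
    intro w hw
    rw [hD, dslope_of_ne _ hw, slope]
    rw [hq0]
    simp only [hq, hS1 w hw, vsub_eq_sub, sub_zero, smul_eq_mul]
    rw [mul_sub]
    congr 1
    · rw [div_div_eq_mul_div]; field_simp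
    · rw [one_div, mul_inv]; ring
  obtain ⟨C1, hC10, hC1⟩ := gauss_bound (Real.pi * τ.im) (Real.pi * (|τ.re| + 1)) (Real.pi * τ.im)
    (mul_pos Real.pi_pos hτ)
  have hbd : ∃ C : ℝ, ∀ x y : ℝ, 0 ≤ y → y ≤ 1/2 → ‖D (x + y * I)‖ ≤ C / (1 + x ^ 2) := by
    have hcomp : IsCompact (Icc (-1:ℝ) 1 ×ℂ Icc (0:ℝ) (1/2)) := isCompact_Icc.reProdIm isCompact_Icc
    obtain ⟨M, hM⟩ := hcomp.exists_bound_of_continuousOn (hDd.continuousOn.mono (by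
      intro w hw
      have h2 := hw.2
      have h3 : 0 ≤ w.im ∧ w.im ≤ 1/2 := h2
      show |w.im| < 1
      rw [abs_of_nonneg h3.1]; linarith [h3.2]))
    refine ⟨2 * |M| + (C1 + 2), fun x y hy hy2 => ?_⟩
    rw [add_div]
    have hx2 : 0 < 1 + x ^ 2 := by positivity
    rcases le_total |x| 1 with hx | hx
    · have h1 := hM (x + y * I) (by
        rw [Complex.mem_reProdIm]; simp; exact ⟨abs_le.1 hx, hy, by linarith⟩)
      have h2 : |M| ≤ 2 * |M| / (1 + x ^ 2) := by
        rw [le_div_iff₀ hx2]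
        have : x ^ 2 ≤ 1 := by rw [← sq_abs]; exact pow_le_one₀ (abs_nonneg _) hx
        nlinarith [abs_nonneg M]
      have h3 : 0 ≤ (C1 + 2) / (1 + x ^ 2) := by positivity
      linarith [le_abs_self M]
    · have h3 : 0 ≤ 2 * |M| / (1 + x ^ 2) := by positivity
      set w : ℂ := x + y * I with hw
      have hre : w.re = x := by simp [hw]
      have him : w.im = y := by simp [hw]
      have hw1 : 1 ≤ ‖w‖ := by
        have := Complex.abs_re_le_norm w
        rw [hre] at this; linarith
      have hw0 : w ≠ 0 := by intro h; rw [h] at hw1; norm_num at hw1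
      rw [hD1 w hw0]
      have hs := norm_sinh_ge w (by rw [hre]; exact hx)
      have h4 : ‖I * cexp (Real.pi * I * τ * w ^ 2 + 2 * Real.pi * b * w) /
          Complex.sinh (Real.pi * w)‖ ≤ C1 / (1 + x ^ 2) := by
        rw [norm_div, norm_mul, norm_I, one_mul]
        refine (div_le_self (norm_nonneg _) hs).trans ?_
        exact (exp_bound τ hτ b hb₁ hb₂ x y hy hy2).trans (hC1 x)
      have h5 : ‖I / Real.pi * (1 / (w * (1 + w ^ 2)))‖ ≤ 2 / (1 + x ^ 2) := by
        have h6 : (1 + x ^ 2) / 2 ≤ ‖1 + w ^ 2‖ := by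
          have := Complex.re_le_norm (1 + w ^ 2)
          have e : (1 + w ^ 2).re = 1 + (x ^ 2 - y ^ 2) := by
            simp [sq, hre, him]
          rw [e] at this
          nlinarith
        have h7 : (1 + x ^ 2) / 2 ≤ ‖w * (1 + w ^ 2)‖ := by
          rw [norm_mul]
          nlinarith
        rw [norm_mul, norm_div, norm_div, norm_I, norm_one, Complex.norm_real,
          Real.norm_of_nonneg Real.pi_pos.le]
        have h8 : 1 / Real.pi ≤ 1 := by
          rw [div_le_one Real.pi_pos]; linarith [Real.pi_gt_three]
        have h9 : 1 / ‖w * (1 + w ^ 2)‖ ≤ 2 / (1 + x ^ 2) := by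
          rw [div_le_div_iff₀ (by linarith) hx2]; linarith
        calc _ ≤ 1 * (1 / ‖w * (1 + w ^ 2)‖) := by gcongr
          _ ≤ _ := by rw [one_mul]; exact h9
      have h10 := norm_sub_le (I * cexp (Real.pi * I * τ * w ^ 2 + 2 * Real.pi * b * w) /
          Complex.sinh (Real.pi * w)) (I / Real.pi * (1 / (w * (1 + w ^ 2))))
      rw [add_div]
      linarith
  obtain ⟨C, hC⟩ := hbd
  obtain ⟨i0, i1, heq⟩ := shift_line D hDd C hC
  obtain ⟨iP, hP⟩ := P_integral
  -- the shifted line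
  have hleft : Complex.exp (2 * (Real.pi : ℂ) * I * (-τ/8 + (b : ℂ)/2)) * mordellH (τ/2 - (b : ℂ)) τ =
      (∫ x : ℝ, D (x + (1/2 : ℝ) * I)) + 1 := by
    have e1 : (1:ℂ) = I / Real.pi * ∫ x : ℝ, 1 / (((x:ℂ) + (1/2 : ℝ) * I) * (1 + ((x:ℂ) + (1/2 : ℝ) * I) ^ 2)) := by
      rw [hP]
      field_simp
      rw [I_sq]; ring
    rw [e1, ← integral_const_mul, ← integral_add i1 (iP.const_mul _), mordellH, ← integral_const_mul]
    refine integral_congr_ae (Filter.Eventually.of_forall fun x => ?_)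
    beta_reduce
    have hw0 : (x:ℂ) + (1/2 : ℝ) * I ≠ 0 := by
      intro h
      have := congrArg Complex.im h
      simp at this
    rw [hD1 _ hw0, sub_add_cancel]
    have hsinh : Complex.sinh (Real.pi * ((x:ℂ) + (1/2 : ℝ) * I)) = I * Complex.cosh (Real.pi * x) := by
      rw [mul_add, show (Real.pi : ℂ) * (((1/2 : ℝ) : ℂ) * I) = (Real.pi / 2 : ℂ) * I by push_cast; ring,
        Complex.sinh_add, Complex.cosh_mul_I, Complex.sinh_mul_I, Complex.cos_pi_div_two,
        Complex.sin_pi_div_two]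
      ring
    rw [hsinh, mul_div_mul_left _ _ I_ne_zero, ← mul_div_assoc, ← Complex.exp_add]
    congr 2
    push_cast
    linear_combination (-(Real.pi * τ * (x:ℂ)) - Real.pi * I * τ / 4) * I_sq
  rw [hleft, ← heq]
  congr 1
  have hneg : ∫ x : ℝ, D x = ∫ x : ℝ, D (-(x:ℂ)) := by
    rw [← integral_neg_eq_self]
    simp
  have i0' : Integrable (fun x : ℝ => D (-(x:ℂ))) := by
    have := i0.comp_neg
    simpa using this
  have h2 : 2 * ∫ x : ℝ, D x = 2 * (I * ∫ x : ℝ, cexp (Real.pi * I * τ * (x:ℂ) ^ 2) *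
        (Complex.sinh (2 * Real.pi * b * x) / Complex.sinh (Real.pi * x))) := by
    calc 2 * ∫ x : ℝ, D x = (∫ x : ℝ, D x) + ∫ x : ℝ, D (-(x:ℂ)) := by rw [← hneg]; ring
      _ = ∫ x : ℝ, (D x + D (-(x:ℂ))) := (integral_add i0 i0').symm
      _ = _ := by
        rw [← mul_assoc, ← integral_const_mul]
        have hae : ∀ᵐ x : ℝ, x ≠ 0 := by simp [ae_iff]
        refine integral_congr_ae (hae.mono fun x hx => ?_)
        have hx' : (x:ℂ) ≠ 0 := by exact_mod_cast hx
        beta_reduce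
        have hs := sinh_pi_ne (x:ℂ) (by simp) hx'
        rw [hD1 _ hx', hD1 _ (neg_ne_zero.2 hx'), mul_neg (Real.pi : ℂ), Complex.sinh_neg, neg_sq,
          mul_neg (2 * (Real.pi:ℂ) * b), Complex.exp_add, Complex.exp_add,
          Complex.sinh.eq_def (2 * (Real.pi:ℂ) * b * x)]
        have h1 : 1 + (x:ℂ) ^ 2 ≠ 0 := hne _ (by simp [hU])
        field_simp
        ring
  exact mul_left_cancel₀ two_ne_zero h2

/-- Lemma 2.7(ii): for `b ∈ (−1/2,1/2) ∖ {0}` and `τ ∈ ℍ`,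
`∫_0^{i∞} g_{1,b+1/2}(z)/√(−i(z+τ)) dz = −i e(−τ/8 + b/2) h(τ/2 − b; τ) + i`. -/
theorem eichler_g1_h (τ : ℂ) (hτ : 0 < τ.im) (b : ℝ)
    (hb₁ : -(1/2) < b) (hb₂ : b < 1/2) (hb₀ : b ≠ 0) :
    MeasureTheory.IntegrableOn
      (fun t : ℝ => gUnary 1 (b + 1/2) (I * t) / ((-I * (I * t + τ)) ^ ((1 : ℂ)/2)))
      (Set.Ioi 0) ∧
    I * ∫ t in Set.Ioi (0 : ℝ),
        gUnary 1 (b + 1/2) (I * t) / ((-I * (I * t + τ)) ^ ((1 : ℂ)/2)) =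
      -I * Complex.exp (2 * (Real.pi : ℂ) * I * (-τ/8 + (b : ℂ)/2)) *
        mordellH (τ/2 - (b : ℂ)) τ + I := by
  obtain ⟨h1, h2⟩ := lhs_eq τ hτ b hb₁ hb₂
  refine ⟨h1, ?_⟩
  have h3 := rhs_eq τ hτ b hb₁ hb₂
  rw [h2, mul_assoc (-I) _ (mordellH _ _), h3]
  linear_combination (∫ x : ℝ, cexp (Real.pi * I * τ * (x:ℂ) ^ 2) *
        (Complex.sinh (2 * Real.pi * b * x) / Complex.sinh (Real.pi * x))) * I_sq
end
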